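/- Let f ∈ 𝒮, let b = |f''(0)|/2, and let P_f(z) = f(z)/f'(z) for z ∈ 𝔻. Let B = ((2π/√3) coth(2π/√3) − 1)/(8/3). If r ∈ (0,1) satisfies (4B − 3b²/7) · r⁴(r⁶ + 2r⁴ + 11r² + 4) ≤ (3/4)(1 − r²)⁵, then P_f belongs to the class 𝒰 on the disk |z| < r, i.e., |P_f'(z)·(z/P_f(z))² − 1| < 1 for all z with 0 < |z| < r. -/

import Mathlib

open Complex Metric Real

/-!
Put `P = f / f'`, `x = |z|²` and `T = P' (z / P)² - 1 = (z f' / f)² - z² f'' / f - 1` (`uDefect`).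
The singularity of `T` at `0` is removable, so by the maximum principle it suffices to bound `|T|`
on one circle outside the disk `|z| < r`.

The tool is Gronwall's area theorem (`area_theorem`). For `g ∈ 𝒮` the square-root transform
`ψ = √(w / g(w))` makes `ω ↦ ψ(ω²) / ω` injective, so the Taylor coefficients `cₘ` of `ψ` satisfy
`∑ (2m - 1) |cₘ|² ≤ 1` (`area_sqrt`). By Cauchy-Schwarz, `ψ(w) - 1 - c₁ w` and `w² ψ''(w)` are
bounded by explicit functions of `|w|`, times `√(1 - |c₁|²)` (`sqrt_transform_bounds`).
This is used in two ways.

* For the Koebe transform of `f` at `z` (`koebe_data`): with `v = ψ(-z) - 1`, so that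
  `(1 + v)² = (1 - x) z f'(z) / f(z)`, the quantity `(1 - x)² |T|` is at most a polynomial
  `majorant` in `Re v` and `|v|²` (`majorant_bound`). For fixed `|v|` it is largest at `v = |v|`
  (`majorant_mono`), which leaves polynomial inequalities in one real variable.
* For `f` itself (`root_data`): `T = 2 z² ψ'' / ψ - (z f' / f - 1)² / 2`, and here `|c₁| = b / 2`.
  Hence `T` is under control when `b` is close to `2` and `|v|` is not too large.

Since `4 B ≥ 3.9413`, the hypothesis on `r` forces `r² ≤ 0.1575`, and it forces `b` to be close to
`2` as soon as `r² > 0.153`. On the circle `|z|² = 0.153` the first bound suffices; on the circles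
`|z|² = 0.155` and `|z|² = 0.1575` the first bound covers large `|v|` and the second small `|v|`.
-/

/-- The class `𝒮` of normalized univalent (analytic and injective) functions
on the unit disk. -/
def InClassS (f : ℂ → ℂ) : Prop :=
  AnalyticOnNhd ℂ f (ball (0 : ℂ) 1) ∧ Set.InjOn f (ball (0 : ℂ) 1) ∧
    f 0 = 0 ∧ deriv f 0 = 1

/-- `γ` are the logarithmic coefficients of `f`: there is an analytic branch `g`
of `log (f z / z)` on the unit disk with `g 0 = 0` whose Taylor coefficients at `0`
are `2 * γ n` for `n ≥ 1`. -/
def IsLogCoeffs (f : ℂ → ℂ) (γ : ℕ → ℂ) : Prop :=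
  ∃ g : ℂ → ℂ, AnalyticOnNhd ℂ g (ball (0 : ℂ) 1) ∧ g 0 = 0 ∧
    (∀ z ∈ ball (0 : ℂ) 1, z ≠ 0 → Complex.exp (g z) = f z / z) ∧
    ∀ n : ℕ, 1 ≤ n → iteratedDeriv n g 0 = (n.factorial : ℂ) * (2 * γ n)

/-- `f` coincides on the unit disk with a rotation `z / (1 - e^{iθ} z)^2`
of the Koebe function. -/
def IsKoebeRotation (f : ℂ → ℂ) : Prop :=
  ∃ θ : ℝ, Set.EqOn f
    (fun z => z / (1 - Complex.exp (θ * Complex.I) * z) ^ 2) (ball (0 : ℂ) 1)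

/-! ### Derivative of an injective analytic function -/

/-- By the open mapping theorem the inverse of `f` is continuous; it is holomorphic at `f w` whenever
`f' w ≠ 0`, hence near `f z` by removability of isolated singularities, and the chain rule gives
`f' z ≠ 0`. -/
lemma deriv_ne_zero_of_injOn {f : ℂ → ℂ} {U : Set ℂ} (hU : IsOpen U) (hf : AnalyticOnNhd ℂ f U)
    (hinj : Set.InjOn f U) {z : ℂ} (hz : z ∈ U) : deriv f z ≠ 0 := by
  have hnc : ∀ w ∈ U, ¬ ∀ᶠ y in nhds w, f y = f w := by
    intro w hw h
    have h2 : ∀ᶠ y in nhdsWithin w {w}ᶜ, False := by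
      filter_upwards [h.filter_mono nhdsWithin_le_nhds,
        (hU.eventually_mem hw).filter_mono nhdsWithin_le_nhds, self_mem_nhdsWithin] with y h1 h2 h3
      exact h3 (hinj h2 hw h1)
    exact h2.exists.elim fun _ h => h
  have key : ∀ w ∈ U, nhds (f w) ≤ Filter.map f (nhds w) := fun w hw =>
    ((hf w hw).eventually_constant_or_nhds_le_map_nhds).resolve_left (hnc w hw)
  set g := Function.invFunOn f U with hgdef
  have hg : ∀ w ∈ U, g (f w) = w := fun w hw => hinj.leftInvOn_invFunOn hw
  have hgc : ∀ w ∈ U, ContinuousAt g (f w) := by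
    intro w hw
    have h1 : Filter.map g (nhds (f w)) ≤ Filter.map g (Filter.map f (nhds w)) :=
      Filter.map_mono (key w hw)
    have h2 : Filter.map g (Filter.map f (nhds w)) = nhds w := by
      rw [Filter.map_map]
      conv_rhs => rw [← Filter.map_id (f := nhds w)]
      apply Filter.map_congr
      filter_upwards [hU.eventually_mem hw] with y hy
      exact hg y hy
    unfold ContinuousAt Filter.Tendsto
    rw [hg w hw]
    exact h1.trans h2.le
  have hdz : ∀ᶠ w in nhds z, w ≠ z → deriv f w ≠ 0 := by
    rcases (hf z hz).deriv.eventually_eq_zero_or_eventually_ne_zero with h | h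
    · exfalso
      obtain ⟨ε, hε, hb⟩ := Metric.eventually_nhds_iff_ball.1 (h.and (hU.eventually_mem hz))
      apply hnc z hz
      filter_upwards [Metric.ball_mem_nhds z hε] with y hy
      refine isOpen_ball.is_const_of_deriv_eq_zero (convex_ball z ε).isPreconnected
        (fun w hw => ((hf w (hb w hw).2).differentiableAt).differentiableWithinAt)
        (fun w hw => (hb w hw).1) hy (mem_ball_self hε)
    · exact eventually_nhdsWithin_iff.1 h
  have hgd : ∀ᶠ y in nhdsWithin (f z) {f z}ᶜ, DifferentiableAt ℂ g y := by
    rw [eventually_nhdsWithin_iff]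
    apply key z hz
    rw [Filter.mem_map]
    filter_upwards [hdz, hU.eventually_mem hz] with w h1 h2 h3
    have hwz : w ≠ z := fun h => h3 (by simp [h])
    have : HasDerivAt f (deriv f w) (g (f w)) := by
      rw [hg w h2]; exact (hf w h2).differentiableAt.hasDerivAt
    refine (this.of_local_left_inverse (hgc w h2) (h1 hwz) ?_).differentiableAt
    apply key w h2
    rw [Filter.mem_map]
    filter_upwards [hU.eventually_mem h2] with v hv
    simp [hg v hv]
  have hga := (Complex.analyticAt_of_differentiable_on_punctured_nhds_of_continuousAt hgd (hgc z hz))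
  have hcomp := hga.differentiableAt.hasDerivAt.comp z (hf z hz).differentiableAt.hasDerivAt
  have hid : HasDerivAt (g ∘ f) 1 z := by
    refine (hasDerivAt_id z).congr_of_eventuallyEq ?_
    filter_upwards [hU.eventually_mem hz] with y hy
    exact hg y hy
  have := hcomp.unique hid
  intro h0
  rw [h0, mul_zero] at this
  exact zero_ne_one this

/-! ### The square-root transform -/

/-- The square-root transform `ψ = √(w / g(w))`. The equation is written without quotients, so that it
also makes sense at `w = 0`. -/
lemma exists_sqrt_transform {g : ℂ → ℂ} (hg : InClassS g) :
    ∃ ψ : ℂ → ℂ, DifferentiableOn ℂ ψ (ball 0 1) ∧ ψ 0 = 1 ∧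
      ∀ w ∈ ball (0 : ℂ) 1, g w * ψ w ^ 2 = w := by
  obtain ⟨ha, hinj, h0, h1⟩ := hg
  have m0 : (0 : ℂ) ∈ ball (0 : ℂ) 1 := mem_ball_self one_pos
  set k := dslope g 0 with hk
  have hkd : DifferentiableOn ℂ k (ball 0 1) :=
    (Complex.differentiableOn_dslope (isOpen_ball.mem_nhds m0)).2 ha.differentiableOn
  have hgk : ∀ w, g w = w * k w := by
    intro w
    have := sub_smul_dslope g 0 w
    simp only [sub_zero, h0, smul_eq_mul] at this
    exact this.symm
  have hk0 : k 0 = 1 := by rw [hk, dslope_same, h1]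
  have hkne : ∀ w ∈ ball (0 : ℂ) 1, k w ≠ 0 := by
    intro w hw h
    have : g w = g 0 := by rw [hgk w, h, h0, mul_zero]
    have : w = 0 := hinj hw m0 this
    rw [this, hk0] at h
    exact one_ne_zero h
  have hq : DifferentiableOn ℂ (fun w => deriv k w / k w) (ball 0 1) :=
    (hkd.deriv isOpen_ball).div hkd hkne
  obtain ⟨L, hL0, hL⟩ := hq.isExactOn_ball.with_val_at 0 0
  have hconst : ∀ w ∈ ball (0 : ℂ) 1, k w * cexp (-L w) = 1 := by
    have hder : ∀ w ∈ ball (0 : ℂ) 1, HasDerivAt (fun w => k w * cexp (-L w)) 0 w := by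
      intro w hw
      have e1 := (hkd.differentiableAt (isOpen_ball.mem_nhds hw)).hasDerivAt
      have e2 := (hL w hw).neg.cexp
      refine (e1.mul e2).congr_deriv ?_
      have := hkne w hw
      simp only [Pi.neg_apply]
      field_simp
      ring
    intro w hw
    have := isOpen_ball.is_const_of_deriv_eq_zero (convex_ball (0 : ℂ) 1).isPreconnected
      (fun w hw => (hder w hw).differentiableAt.differentiableWithinAt)
      (fun w hw => (hder w hw).deriv) hw m0
    simpa [hk0, hL0] using this
  refine ⟨fun w => cexp (-L w / 2), ?_, by simp [hL0], ?_⟩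
  · intro w hw
    exact ((hL w hw).differentiableAt.neg.div_const 2).cexp.differentiableWithinAt
  · intro w hw
    have : cexp (-L w / 2) ^ 2 = cexp (-L w) := by
      rw [← Complex.exp_nat_mul]; congr 1; push_cast; ring
    rw [this, hgk w, mul_assoc, hconst w hw, mul_one]

/-! ### Power series on the unit disk -/

lemma HasSum.congr_fun' {u v : ℕ → ℂ} {s : ℂ} (h : HasSum u s) (e : ∀ n, v n = u n) :
    HasSum v s := by
  rwa [show v = u from funext e]

lemma hasFPowerSeries_of_hasSum {a : ℕ → ℂ} {h : ℂ → ℂ}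
    (H : ∀ w ∈ ball (0 : ℂ) 1, HasSum (fun n => a n * w ^ n) (h w)) :
    HasFPowerSeriesOnBall h (FormalMultilinearSeries.ofScalars ℂ a) 0 1 := by
  refine ⟨?_, one_pos, ?_⟩
  · refine ENNReal.le_of_forall_nnreal_lt fun r hr => ?_
    apply FormalMultilinearSeries.le_radius_of_summable_norm
    have hr1 : (r : ℝ) < 1 := by exact_mod_cast hr
    have := (H (r : ℂ) (by simpa using hr1)).summable.norm
    refine this.congr fun n => ?_
    rw [FormalMultilinearSeries.ofScalars_norm]
    simp
  · intro y hy
    have hy' : y ∈ ball (0 : ℂ) 1 := by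
      rw [← Metric.eball_ofReal] ; simpa using hy
    have := H y hy'
    simpa [FormalMultilinearSeries.ofScalars_apply_eq, mul_comm] using this

lemma differentiableOn_of_hasSum {a : ℕ → ℂ} {h : ℂ → ℂ}
    (H : ∀ w ∈ ball (0 : ℂ) 1, HasSum (fun n => a n * w ^ n) (h w)) :
    DifferentiableOn ℂ h (ball 0 1) := by
  have := (hasFPowerSeries_of_hasSum H).differentiableOn
  rwa [← Metric.eball_ofReal, ENNReal.ofReal_one]

lemma hasSum_taylor_unit {h : ℂ → ℂ} (hd : DifferentiableOn ℂ h (ball 0 1)) :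
    ∀ w ∈ ball (0 : ℂ) 1,
      HasSum (fun n => (iteratedDeriv n h 0 / (n.factorial : ℂ)) * w ^ n) (h w) := by
  intro w hw
  have := Complex.hasSum_taylorSeries_on_ball hd hw
  refine this.congr_fun' fun n => ?_
  simp only [sub_zero, smul_eq_mul, div_eq_mul_inv]; ring

/-- Removal of the constant term of a power series, and division by the variable. -/
lemma exists_shift {a : ℕ → ℂ} {h : ℂ → ℂ}
    (H : ∀ w ∈ ball (0 : ℂ) 1, HasSum (fun n => a n * w ^ n) (h w)) :
    ∃ k : ℂ → ℂ, (∀ w ∈ ball (0 : ℂ) 1, HasSum (fun n => a (n + 1) * w ^ n) (k w)) ∧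
      ∀ w ∈ ball (0 : ℂ) 1, h w = a 0 + w * k w := by
  set k : ℂ → ℂ := fun w => ∑' n, a (n + 1) * w ^ n with hk
  have hsum : ∀ w ∈ ball (0 : ℂ) 1, HasSum (fun n => a (n + 1) * w ^ n) (k w) := by
    intro w hw
    apply Summable.hasSum
    by_cases h0 : w = 0
    · refine summable_of_ne_finset_zero (s := {0}) fun n hn => ?_
      have : n ≠ 0 := by simpa using hn
      simp [h0, this]
    · have h1 := (summable_nat_add_iff 1).2 (H w hw).summable
      refine (h1.mul_left w⁻¹).congr fun n => ?_
      field_simp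
      ring
  have hhk : ∀ w ∈ ball (0 : ℂ) 1, h w = a 0 + w * k w := by
    intro w hw
    have h1 := (hsum w hw).mul_left w
    have h1' : HasSum (fun n => a (n + 1) * w ^ (n + 1)) (w * k w) :=
      h1.congr_fun' fun n => by ring
    have h2 := (hasSum_nat_add_iff (f := fun n => a n * w ^ n) 1).1 h1'
    simp at h2
    rw [add_comm]
    exact (H w hw).unique h2
  exact ⟨k, hsum, hhk⟩

lemma coeff_unique {a a' : ℕ → ℂ} {h : ℂ → ℂ}
    (H : ∀ w ∈ ball (0 : ℂ) 1, HasSum (fun n => a n * w ^ n) (h w))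
    (H' : ∀ w ∈ ball (0 : ℂ) 1, HasSum (fun n => a' n * w ^ n) (h w)) : a = a' :=
  FormalMultilinearSeries.ofScalars_series_injective (𝕜 := ℂ) (E := ℂ)
    ((hasFPowerSeries_of_hasSum H).hasFPowerSeriesAt.eq_formalMultilinearSeries
      (hasFPowerSeries_of_hasSum H').hasFPowerSeriesAt)

lemma hasSum_deriv {a : ℕ → ℂ} {h : ℂ → ℂ}
    (H : ∀ w ∈ ball (0 : ℂ) 1, HasSum (fun n => a n * w ^ n) (h w)) :
    ∀ w ∈ ball (0 : ℂ) 1, HasSum (fun n => ((n + 1 : ℕ) * a (n + 1)) * w ^ n) (deriv h w) := by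
  intro w hw
  have hd := differentiableOn_of_hasSum H
  have ha := coeff_unique H (hasSum_taylor_unit hd)
  refine (hasSum_taylor_unit (hd.deriv isOpen_ball) w hw).congr_fun' fun n => ?_
  simp only [ha]
  rw [← iteratedDeriv_succ', Nat.factorial_succ]
  push_cast
  have : ((n : ℂ) + 1) ≠ 0 := Nat.cast_add_one_ne_zero n
  field_simp

lemma hasSum_mul_deriv {a : ℕ → ℂ} {h : ℂ → ℂ}
    (H : ∀ w ∈ ball (0 : ℂ) 1, HasSum (fun n => a n * w ^ n) (h w)) :
    ∀ w ∈ ball (0 : ℂ) 1, HasSum (fun n : ℕ => ((n : ℂ) * a n) * w ^ n) (w * deriv h w) := by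
  intro w hw
  have h1 : HasSum (fun n : ℕ => ((n + 1 : ℕ) * a (n + 1)) * w ^ (n + 1)) (w * deriv h w) :=
    ((hasSum_deriv H w hw).mul_left w).congr_fun' fun n => by ring
  simpa using (hasSum_nat_add_iff (f := fun n : ℕ => ((n : ℂ) * a n) * w ^ n) 1).1 h1

/-- Bessel's inequality on a circle, by induction on `N`: the mean of `|h|²` splits off the constant
term of `h`, and the rest has one coefficient fewer. -/
lemma bessel_circle (N : ℕ) : ∀ {a : ℕ → ℂ} {h : ℂ → ℂ}
    (_ : ∀ w ∈ ball (0 : ℂ) 1, HasSum (fun n => a n * w ^ n) (h w)) {R : ℝ} (_ : 0 ≤ R)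
    (_ : R < 1),
    ∑ n ∈ Finset.range N, ‖a n‖ ^ 2 * R ^ (2 * n) ≤ circleAverage (fun w => ‖h w‖ ^ 2) 0 R := by
  induction N with
  | zero =>
    intro a h _ R _ _
    simp only [Finset.range_zero, Finset.sum_empty]
    apply circleAverage_nonneg_of_nonneg
    intro x _; positivity
  | succ N ih =>
    intro a h H R hR0 hR1
    have habs : |R| = R := abs_of_nonneg hR0
    have hsub : closedBall (0 : ℂ) R ⊆ ball 0 1 := closedBall_subset_ball hR1
    have hsph : sphere (0 : ℂ) |R| ⊆ ball 0 1 := by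
      rw [habs]; exact sphere_subset_closedBall.trans hsub
    obtain ⟨k, hsum, hhk⟩ := exists_shift H
    have hkd := differentiableOn_of_hasSum hsum
    have hkc : ContinuousOn k (sphere 0 |R|) := hkd.continuousOn.mono hsph
    have e1 : circleAverage (fun w => ‖h w‖ ^ 2) 0 R
        = circleAverage (fun w => ‖a 0‖ ^ 2 + (R ^ 2 * ‖k w‖ ^ 2
          + 2 * (starRingEnd ℂ (a 0) * (w * k w)).re)) 0 R := by
      apply circleAverage_congr_sphere
      intro w hw
      have hw1 := hsph hw
      have hwn : ‖w‖ = R := by simpa [habs] using hw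
      simp only []
      rw [hhk w hw1, ← Complex.normSq_eq_norm_sq, Complex.normSq_add, Complex.normSq_eq_norm_sq,
        Complex.normSq_eq_norm_sq, norm_mul, hwn]
      have : (a 0 * (starRingEnd ℂ) (w * k w)).re = (starRingEnd ℂ (a 0) * (w * k w)).re := by
        rw [← Complex.conj_re]; simp
      rw [this]; ring
    have hmv : circleAverage (fun w => starRingEnd ℂ (a 0) * (w * k w)) 0 R = 0 := by
      have : DiffContOnCl ℂ (fun w => starRingEnd ℂ (a 0) * (w * k w)) (ball 0 |R|) := by
        refine DifferentiableOn.diffContOnCl ?_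
        rw [habs]
        refine DifferentiableOn.mono ?_ (closure_ball_subset_closedBall.trans hsub)
        exact (differentiableOn_id.mul hkd).const_mul _
      rw [this.circleAverage]; simp
    have ci1 : CircleIntegrable (fun w => R ^ 2 * ‖k w‖ ^ 2) 0 R := by
      apply ContinuousOn.circleIntegrable'
      exact (hkc.norm.pow 2).const_smul (R^2)
    have ciz : CircleIntegrable (fun w => starRingEnd ℂ (a 0) * (w * k w)) 0 R := by
      apply ContinuousOn.circleIntegrable'
      exact (continuousOn_id.mul hkc).const_smul (starRingEnd ℂ (a 0))
    have ci2 : CircleIntegrable (fun w => 2 * (starRingEnd ℂ (a 0) * (w * k w)).re) 0 R := by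
      apply ContinuousOn.circleIntegrable'
      exact (Complex.continuous_re.comp_continuousOn
        ((continuousOn_id.mul hkc).const_smul (starRingEnd ℂ (a 0)))).const_smul (2:ℝ)
    have hre : circleAverage (fun w => 2 * (starRingEnd ℂ (a 0) * (w * k w)).re) 0 R = 0 := by
      have h1 : circleAverage (fun w => (starRingEnd ℂ (a 0) * (w * k w)).re) 0 R = 0 := by
        rw [circleAverage] at hmv ⊢
        have h3 := congrArg Complex.re hmv
        rw [Complex.smul_re] at h3
        have h4 := (Complex.reCLM.intervalIntegral_comp_comm ciz)
        simp only [Complex.reCLM_apply] at h4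
        rw [h4]; simpa using h3
      have := circleAverage_fun_smul (a := (2:ℝ)) (f := fun w => (starRingEnd ℂ (a 0) * (w * k w)).re) (c := 0) (R := R)
      simp only [smul_eq_mul] at this
      rw [this, h1]; simp
    have hk2 : circleAverage (fun w => R ^ 2 * ‖k w‖ ^ 2) 0 R
        = R ^ 2 * circleAverage (fun w => ‖k w‖ ^ 2) 0 R := by
      have := circleAverage_fun_smul (a := (R ^ 2:ℝ)) (f := fun w => ‖k w‖ ^ 2) (c := 0) (R := R)
      simpa only [smul_eq_mul] using this
    have e2 : circleAverage (fun w => ‖h w‖ ^ 2) 0 R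
        = ‖a 0‖ ^ 2 + R ^ 2 * circleAverage (fun w => ‖k w‖ ^ 2) 0 R := by
      have ci3 : CircleIntegrable (fun w => R ^ 2 * ‖k w‖ ^ 2
          + 2 * (starRingEnd ℂ (a 0) * (w * k w)).re) 0 R := ci1.add ci2
      rw [e1, circleAverage_fun_add (circleIntegrable_const _ _ _) ci3,
        circleAverage_fun_add ci1 ci2, hre, hk2, circleAverage_const]; ring
    rw [e2, Finset.sum_range_succ']
    have := mul_le_mul_of_nonneg_left (ih hsum hR0 hR1) (sq_nonneg R)
    rw [Finset.mul_sum] at this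
    have h3 : ∑ i ∈ Finset.range N, ‖a (i + 1)‖ ^ 2 * R ^ (2 * (i + 1))
        = ∑ i ∈ Finset.range N, R ^ 2 * (‖a (i + 1)‖ ^ 2 * R ^ (2 * i)) := by
      refine Finset.sum_congr rfl fun i _ => by ring
    rw [h3]
    simp only [mul_zero, pow_zero, mul_one]
    linarith

/-! ### Area estimates on an annulus -/

open MeasureTheory in
lemma integral_Ioo_circleMap (F : ℂ → ℝ) (t : ℝ) :
    ∫ θ in Set.Ioo (-π) π, F (circleMap 0 t θ) = 2 * π * circleAverage F 0 t := by
  rw [circleAverage_eq_integral_add (-π), intervalIntegral.integral_comp_add_right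
    (fun θ => F (circleMap 0 t θ)), smul_eq_mul, ← integral_Ioc_eq_integral_Ioo,
    intervalIntegral.integral_of_le (by linarith [pi_pos])]
  have : (2 * π + -π) = π := by ring
  rw [this, zero_add, ← mul_assoc, mul_inv_cancel₀ (by positivity), one_mul]

open MeasureTheory in
/-- Lower bound, by polar coordinates and Bessel's inequality on each circle, for the area
`∫ |h / ω²|²` of the image of an annulus under a map with derivative `h / ω²`. -/
lemma annulus_lower {a : ℕ → ℂ} {h : ℂ → ℂ}
    (H : ∀ w ∈ ball (0 : ℂ) 1, HasSum (fun n => a n * w ^ n) (h w)) {s ρ : ℝ} (hs : 0 < s)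
    (hsρ : s < ρ) (hρ : ρ < 1) (N : ℕ) :
    ENNReal.ofReal (∫ t in s..ρ, 2 * π * (t⁻¹ ^ 3 * ∑ n ∈ Finset.range N, ‖a n‖ ^ 2 * t ^ (2 * n)))
      ≤ ∫⁻ ω in {ω : ℂ | s < ‖ω‖ ∧ ‖ω‖ < ρ}, ENNReal.ofReal (‖h ω‖ ^ 2 / ‖ω‖ ^ 4) := by
  set A : Set ℂ := {ω : ℂ | s < ‖ω‖ ∧ ‖ω‖ < ρ} with hA
  have hAm : MeasurableSet A := by
    apply IsOpen.measurableSet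
    exact (isOpen_lt continuous_const continuous_norm).inter
      (isOpen_lt continuous_norm continuous_const)
  have hhc : ContinuousOn h (ball 0 1) := (differentiableOn_of_hasSum H).continuousOn
  have hmemA : ∀ p : ℝ × ℝ, p ∈ Set.Ioo s ρ ×ˢ Set.Ioo (-π) π →
      ‖circleMap 0 p.1 p.2‖ = p.1 := by
    intro p hp
    rw [norm_circleMap_zero, abs_of_pos (hs.trans hp.1.1)]
  rw [← lintegral_indicator hAm, ← Complex.lintegral_comp_polarCoord_symm]
  calc _ ≤ ∫⁻ p in Set.Ioo s ρ ×ˢ Set.Ioo (-π) π,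
        ENNReal.ofReal (p.1⁻¹ ^ 3 * ‖h (circleMap 0 p.1 p.2)‖ ^ 2) := ?_
    _ = ∫⁻ p in Set.Ioo s ρ ×ˢ Set.Ioo (-π) π, ENNReal.ofReal p.1 •
        A.indicator (fun ω => ENNReal.ofReal (‖h ω‖ ^ 2 / ‖ω‖ ^ 4))
          (Complex.polarCoord.symm p) := by
        refine setLIntegral_congr_fun (measurableSet_Ioo.prod measurableSet_Ioo) ?_
        intro p hp
        have e : Complex.polarCoord.symm p = circleMap 0 p.1 p.2 := by
          rw [Complex.polarCoord_symm_apply, circleMap, Complex.exp_mul_I]; simp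
        have hn := hmemA p hp
        have hp0 : 0 < p.1 := hs.trans hp.1.1
        have hin : circleMap 0 p.1 p.2 ∈ A := by
          rw [hA, Set.mem_ofPred_eq, hn]; exact hp.1
        simp only [e]
        rw [Set.indicator_of_mem hin, hn, smul_eq_mul, ← ENNReal.ofReal_mul hp0.le]
        congr 1
        field_simp
    _ ≤ _ := by
        apply lintegral_mono_set
        rw [polarCoord_target]
        exact Set.prod_mono (fun t ht => hs.trans ht.1) le_rfl
  have hcont : ContinuousOn (fun p : ℝ × ℝ => p.1⁻¹ ^ 3 * ‖h (circleMap 0 p.1 p.2)‖ ^ 2)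
      (Set.Ioo s ρ ×ˢ Set.Ioo (-π) π) := by
    refine ContinuousOn.mul (ContinuousOn.pow (ContinuousOn.inv₀ continuousOn_fst ?_) 3) ?_
    · intro p hp; exact (hs.trans hp.1.1).ne'
    · refine (ContinuousOn.norm (hhc.comp ?_ ?_)).pow 2
      · unfold circleMap; fun_prop
      · intro p hp
        rw [mem_ball_zero_iff, hmemA p hp]
        exact hp.1.2.trans hρ
  have hv : (volume : Measure (ℝ × ℝ)) = (volume : Measure ℝ).prod volume := rfl
  rw [hv, ← Measure.prod_restrict, lintegral_prod]
  swap
  · rw [Measure.prod_restrict]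
    exact (hcont.aemeasurable (measurableSet_Ioo.prod measurableSet_Ioo)).ennreal_ofReal
  have hinner : ∀ t ∈ Set.Ioo s ρ,
      ENNReal.ofReal (2 * π * (t⁻¹ ^ 3 * ∑ n ∈ Finset.range N, ‖a n‖ ^ 2 * t ^ (2 * n))) ≤
      ∫⁻ θ in Set.Ioo (-π) π, ENNReal.ofReal (t⁻¹ ^ 3 * ‖h (circleMap 0 t θ)‖ ^ 2) := by
    intro t ht
    have ht0 : 0 < t := hs.trans ht.1
    have hc : Continuous fun θ => t⁻¹ ^ 3 * ‖h (circleMap 0 t θ)‖ ^ 2 := by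
      refine continuous_const.mul ((hhc.comp_continuous (continuous_circleMap 0 t) ?_).norm.pow 2)
      intro θ
      rw [mem_ball_zero_iff, norm_circleMap_zero, abs_of_pos ht0]
      exact ht.2.trans hρ
    rw [← ofReal_integral_eq_lintegral_ofReal]
    · apply ENNReal.ofReal_le_ofReal
      rw [integral_const_mul, integral_Ioo_circleMap (fun w => ‖h w‖ ^ 2)]
      have := bessel_circle N H ht0.le (ht.2.trans hρ)
      have h3 : 0 ≤ 2 * π * t⁻¹ ^ 3 := by positivity
      nlinarith [mul_le_mul_of_nonneg_left this h3]
    · exact (hc.integrableOn_Icc (a := -π) (b := π)).mono_set Set.Ioo_subset_Icc_self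
    · exact Filter.Eventually.of_forall fun θ => by positivity
  refine le_trans ?_ (setLIntegral_mono' measurableSet_Ioo hinner)
  rw [intervalIntegral.integral_of_le hsρ.le, integral_Ioc_eq_integral_Ioo,
    ofReal_integral_eq_lintegral_ofReal]
  · have : ContinuousOn (fun t : ℝ => 2 * π * (t⁻¹ ^ 3 *
        ∑ n ∈ Finset.range N, ‖a n‖ ^ 2 * t ^ (2 * n))) (Set.Icc s ρ) := by
      refine continuousOn_const.mul (ContinuousOn.mul
        (ContinuousOn.pow (ContinuousOn.inv₀ continuousOn_id ?_) 3) ?_)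
      · intro p hp; exact (hs.trans_le hp.1).ne'
      · fun_prop
    exact this.integrableOn_Icc.mono_set Set.Ioo_subset_Icc_self
  · refine (ae_restrict_iff' measurableSet_Ioo).2 (Filter.Eventually.of_forall fun t ht => ?_)
    have ht0 : 0 < t := hs.trans ht.1
    positivity

/-- The real Jacobian determinant of `v ↦ a v - c v̄` is `|a|² - |c|²`. -/
lemma det_of_eq {L : ℂ →ₗ[ℝ] ℂ} {a c : ℂ} (hL : ∀ v, L v = a * v - c * starRingEnd ℂ v) :
    LinearMap.det L = ‖a‖ ^ 2 - ‖c‖ ^ 2 := by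
  rw [← LinearMap.det_toMatrix Complex.basisOneI, Matrix.det_fin_two, ← Complex.normSq_eq_norm_sq,
    ← Complex.normSq_eq_norm_sq, Complex.normSq_apply, Complex.normSq_apply]
  simp [LinearMap.toMatrix_apply, hL]
  ring

open MeasureTheory in
/-- Upper bound for the area `∫ |q'|²` of `q(A)`: if the real-linear map `v ↦ v - c v̄`, whose
determinant is `1 - |c|²`, carries `q(A)` into a disk of radius `R`, then the area of `q(A)` is at
most `π R² / (1 - |c|²)`. -/
lemma annulus_upper {q q' : ℂ → ℂ} {A : Set ℂ} (hAm : MeasurableSet A)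
    (hq : ∀ ω ∈ A, HasDerivAt q (q' ω) ω) (hinj : Set.InjOn q A) {c : ℂ} (hc : ‖c‖ < 1) {R : ℝ}
    (hR : 0 ≤ R) (hb : ∀ ω ∈ A, ‖q ω - c * starRingEnd ℂ (q ω)‖ ≤ R) :
    ENNReal.ofReal (1 - ‖c‖ ^ 2) * ∫⁻ ω in A, ENNReal.ofReal (‖q' ω‖ ^ 2)
      ≤ ENNReal.ofReal (π * R ^ 2) := by
  set Λ : ℂ →L[ℝ] ℂ := ContinuousLinearMap.id ℝ ℂ
    - (ContinuousLinearMap.mul ℝ ℂ c).comp (conjCLE : ℂ →L[ℝ] ℂ) with hΛ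
  have hΛa : ∀ v, Λ v = v - c * starRingEnd ℂ v := by intro v; simp [hΛ]
  set D : ℂ → ℂ →L[ℝ] ℂ := fun ω =>
    (ContinuousLinearMap.toSpanSingleton ℂ (q' ω)).restrictScalars ℝ with hD
  have hDa : ∀ ω v, D ω v = q' ω * v := by intro ω v; simp [hD, mul_comm]
  have hder : ∀ ω ∈ A, HasFDerivWithinAt (fun ω => Λ (q ω)) (Λ.comp (D ω)) A ω := by
    intro ω hω
    exact (Λ.hasFDerivAt.comp ω ((hq ω hω).hasFDerivAt.restrictScalars ℝ)).hasFDerivWithinAt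
  have hΛinj : Function.Injective Λ := by
    rw [injective_iff_map_eq_zero]
    intro v hv
    by_contra h0
    rw [hΛa, sub_eq_zero] at hv
    have h1 : ‖v‖ = ‖c‖ * ‖v‖ := by
      conv_lhs => rw [hv]
      simp
    have : 0 < ‖v‖ := norm_pos_iff.2 h0
    nlinarith
  have hinj2 : Set.InjOn (fun ω => Λ (q ω)) A := fun x hx y hy h => hinj hx hy (hΛinj h)
  have hdet : ∀ ω, (Λ.comp (D ω)).det = (1 - ‖c‖ ^ 2) * ‖q' ω‖ ^ 2 := by
    intro ω
    rw [ContinuousLinearMap.det, det_of_eq (a := q' ω) (c := c * starRingEnd ℂ (q' ω))]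
    · simp; ring
    · intro v
      simp only [ContinuousLinearMap.coe_coe, ContinuousLinearMap.comp_apply, hΛa, hDa, map_mul]
      ring
  have hpos : 0 ≤ 1 - ‖c‖ ^ 2 := by nlinarith [norm_nonneg c]
  have harea := lintegral_abs_det_fderiv_eq_addHaar_image volume hAm hder hinj2
  have hsub : (fun ω => Λ (q ω)) '' A ⊆ closedBall 0 R := by
    rintro _ ⟨ω, hω, rfl⟩
    rw [mem_closedBall_zero_iff]
    simpa only [hΛa] using hb ω hω
  have h1 := harea.le.trans (measure_mono hsub)
  rw [Complex.volume_closedBall] at h1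
  rw [← lintegral_const_mul' _ _ ENNReal.ofReal_ne_top]
  calc _ = ∫⁻ ω in A, ENNReal.ofReal |(Λ.comp (D ω)).det| := by
        refine lintegral_congr fun ω => ?_
        rw [hdet, abs_of_nonneg (by positivity), ENNReal.ofReal_mul hpos]
    _ ≤ _ := h1
    _ = _ := by
        rw [ENNReal.ofReal_mul pi_pos.le, ENNReal.ofReal_pow hR, mul_comm]
        congr 1
        rw [← NNReal.coe_real_pi, ENNReal.ofReal_coe_nnreal]

/-- The left side bounds `|q - c q̄|` on `|ω| = t` for `q = 1 / ω + d₂ ω + O(ω²)` and `c = d₂ s²`, where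
`D = |d₂|` and `E` bounds the remainder. -/
lemma ellipse_bound {D E s t : ℝ} (hD : 0 ≤ D) (hE : 0 ≤ E) (hs : 0 < s) (hst : s < t)
    (ht : t < 1) (hsmall : s * (2 * D + 2 * E) ≤ 1) :
    1 / t + D * (t - s ^ 2 / t) + E * t ^ 2 + D * s ^ 2 * (D * t + E * t ^ 2)
      ≤ 1 / s + (E + D * (D + E)) * s ^ 2 := by
  have ht0 : 0 < t := hs.trans hst
  have e : 1 / s + (E + D * (D + E)) * s ^ 2
      - (1 / t + D * (t - s ^ 2 / t) + E * t ^ 2 + D * s ^ 2 * (D * t + E * t ^ 2))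
      = (t - s) * (1 - s * (D * (t + s)) - s * t * E * (t + s)) / (s * t)
        + D * s ^ 2 * (D * (1 - t) + E * (1 - t ^ 2)) := by
    field_simp
    ring
  have h1 : s * (D * (t + s)) + s * t * E * (t + s) ≤ 1 := by
    have a1 : D * (t + s) ≤ 2 * D := by nlinarith
    have a2 : t * (t + s) ≤ 2 := by nlinarith
    have a3 : E * (t * (t + s)) ≤ E * 2 := mul_le_mul_of_nonneg_left a2 hE
    nlinarith [mul_le_mul_of_nonneg_left a1 hs.le, mul_le_mul_of_nonneg_left a3 hs.le]
  have h2 : 0 ≤ (t - s) * (1 - s * (D * (t + s)) - s * t * E * (t + s)) / (s * t) := by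
    apply div_nonneg (mul_nonneg (by linarith) (by linarith)) (by positivity)
  have h3 : 0 ≤ D * s ^ 2 * (D * (1 - t) + E * (1 - t ^ 2)) := by
    have : 0 ≤ 1 - t ^ 2 := by nlinarith
    have : 0 ≤ 1 - t := by linarith
    positivity
  linarith

lemma integral_annulus_terms {s ρ : ℝ} (hs : 0 < s) (hsρ : s < ρ) {e : ℕ → ℝ} (h0 : e 0 = 1)
    (h1 : e 1 = 0) (N : ℕ) :
    ∫ t in s..ρ, 2 * π * (t⁻¹ ^ 3 * ∑ n ∈ Finset.range (N + 2), e n * t ^ (2 * n))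
      = π * (1 / s ^ 2 - 1 / ρ ^ 2
        + ∑ k ∈ Finset.range N, e (k + 2) / (k + 1) * (ρ ^ (2 * k + 2) - s ^ (2 * k + 2))) := by
  have hder : ∀ t ∈ Set.uIcc s ρ, HasDerivAt (fun t : ℝ => π * (-(t ^ 2)⁻¹
      + ∑ k ∈ Finset.range N, e (k + 2) / (k + 1) * t ^ (2 * k + 2)))
      (2 * π * (t⁻¹ ^ 3 * ∑ n ∈ Finset.range (N + 2), e n * t ^ (2 * n))) t := by
    intro t ht
    rw [Set.uIcc_of_le hsρ.le] at ht
    have ht0 : t ≠ 0 := (hs.trans_le ht.1).ne'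
    have d1 : HasDerivAt (fun t : ℝ => -(t ^ 2)⁻¹) (2 * t⁻¹ ^ 3) t := by
      refine ((hasDerivAt_pow 2 t).inv (by positivity)).neg.congr_deriv ?_
      field_simp
      norm_num
      ring
    have d2 : HasDerivAt (fun t : ℝ => ∑ k ∈ Finset.range N, e (k + 2) / (k + 1) * t ^ (2 * k + 2))
        (∑ k ∈ Finset.range N, 2 * (e (k + 2) * t ^ (2 * k + 1))) t := by
      refine HasDerivAt.fun_sum fun k _ => ?_
      refine ((hasDerivAt_pow (2 * k + 2) t).const_mul _).congr_deriv ?_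
      push_cast
      have : (k : ℝ) + 1 ≠ 0 := by positivity
      field_simp
    refine ((d1.add d2).const_mul π).congr_deriv ?_
    rw [Finset.sum_range_succ', Finset.sum_range_succ', h0, h1, ← Finset.mul_sum]
    have : t⁻¹ ^ 3 * ∑ k ∈ Finset.range N, e (k + 1 + 1) * t ^ (2 * (k + 1 + 1))
        = ∑ k ∈ Finset.range N, e (k + 2) * t ^ (2 * k + 1) := by
      rw [Finset.mul_sum]
      refine Finset.sum_congr rfl fun k _ => ?_
      have : t ^ (2 * (k + 1 + 1)) = t ^ (2 * k + 1) * t ^ 3 := by ring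
      rw [this]
      field_simp
    rw [← this]; ring
  rw [intervalIntegral.integral_eq_sub_of_hasDerivAt hder]
  · simp only [mul_sub, Finset.sum_sub_distrib]; ring
  · apply ContinuousOn.intervalIntegrable
    refine continuousOn_const.mul (ContinuousOn.mul
        (ContinuousOn.pow (ContinuousOn.inv₀ continuousOn_id ?_) 3) (by fun_prop))
    intro p hp
    rw [Set.uIcc_of_le hsρ.le] at hp
    exact (hs.trans_le hp.1).ne'

/-! ### The area theorem -/

/-- Area comparison for the injective map `q(ω) = p(ω) / ω = 1 / ω + d₂ ω + ⋯` on `s < |ω| < ρ`. The curve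
`q(|ω| = s)` is close to an ellipse, which `v ↦ v - c v̄` with `c = d₂ s²` turns into a near-circle of
radius `1 / s + O(s²)`; the error is small enough for the main terms `1 / s²` to cancel as `s → 0`. -/
lemma area_at_radius {d : ℕ → ℂ} {p : ℂ → ℂ}
    (H : ∀ w ∈ ball (0 : ℂ) 1, HasSum (fun n => d n * w ^ n) (p w)) (d0 : d 0 = 1) (d1 : d 1 = 0)
    (hinj : Set.InjOn (fun ω => p ω / ω) (ball 0 1 \ {0})) {ρ : ℝ} (hρ0 : 0 < ρ) (hρ1 : ρ < 1) :
    ∃ K, ∃ s₀ > 0, ∀ s, 0 < s → s < s₀ → ∀ N,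
      (1 - (‖d 2‖ * s ^ 2) ^ 2) * (1 / s ^ 2 - 1 / ρ ^ 2
        + ∑ k ∈ Finset.range N, (k + 1) * ‖d (k + 2)‖ ^ 2 * (ρ ^ (2 * k + 2) - s ^ (2 * k + 2)))
      ≤ (1 / s + K * s ^ 2) ^ 2 := by
  obtain ⟨k1, hk1, e1⟩ := exists_shift H
  obtain ⟨k2, hk2, e2⟩ := exists_shift hk1
  obtain ⟨k3, hk3, e3⟩ := exists_shift hk2
  have hp : ∀ w ∈ ball (0 : ℂ) 1, p w = 1 + d 2 * w ^ 2 + w ^ 3 * k3 w := by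
    intro w hw
    rw [e1 w hw, e2 w hw, e3 w hw, d0]
    simp only [zero_add, d1]
    ring
  have hsub : closedBall (0 : ℂ) ρ ⊆ ball 0 1 := closedBall_subset_ball hρ1
  obtain ⟨E, hE⟩ := (isCompact_closedBall (0 : ℂ) ρ).exists_bound_of_continuousOn
    ((differentiableOn_of_hasSum hk3).continuousOn.mono hsub)
  have hE0 : 0 ≤ E := (norm_nonneg _).trans (hE 0 (mem_closedBall_self hρ0.le))
  set D := ‖d 2‖ with hDdef
  have hD0 : 0 ≤ D := norm_nonneg _
  refine ⟨E + D * (D + E), min ρ (1 / (2 * D + 2 * E + 1)), by positivity, ?_⟩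
  intro s hs hs0 N
  have hsρ : s < ρ := hs0.trans_le (min_le_left _ _)
  have hs2 : s * (2 * D + 2 * E + 1) < 1 := by
    have := hs0.trans_le (min_le_right _ _)
    rwa [lt_div_iff₀ (by positivity)] at this
  set A : Set ℂ := {ω : ℂ | s < ‖ω‖ ∧ ‖ω‖ < ρ} with hA
  have hAm : MeasurableSet A := by
    apply IsOpen.measurableSet
    exact (isOpen_lt continuous_const continuous_norm).inter
      (isOpen_lt continuous_norm continuous_const)
  have hAb : ∀ ω ∈ A, ω ∈ ball (0 : ℂ) 1 := fun ω hω => by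
    rw [mem_ball_zero_iff]; exact hω.2.trans hρ1
  have hA0 : ∀ ω ∈ A, ω ≠ 0 := fun ω hω => norm_pos_iff.1 (hs.trans hω.1)
  have hpd := differentiableOn_of_hasSum H
  set h : ℂ → ℂ := fun w => w * deriv p w - p w with hh
  have Hh : ∀ w ∈ ball (0 : ℂ) 1, HasSum (fun n : ℕ => (((n : ℂ) - 1) * d n) * w ^ n) (h w) := by
    intro w hw
    exact ((hasSum_mul_deriv H w hw).sub (H w hw)).congr_fun' fun n => by ring
  have hq : ∀ ω ∈ A, HasDerivAt (fun ω => p ω / ω) (h ω / ω ^ 2) ω := by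
    intro ω hω
    have := (hpd.differentiableAt (isOpen_ball.mem_nhds (hAb ω hω))).hasDerivAt.div
      (hasDerivAt_id ω) (hA0 ω hω)
    refine this.congr_deriv ?_
    simp [hh]; ring
  have hcs : ‖d 2 * (s : ℂ) ^ 2‖ = D * s ^ 2 := by
    simp [hDdef, abs_of_pos hs]
  have hs1 : s < 1 := hsρ.trans hρ1
  have hDs : D * s ^ 2 < 1 := by nlinarith
  have hAsub : A ⊆ ball (0 : ℂ) 1 \ {0} := fun ω hω => ⟨hAb ω hω, hA0 ω hω⟩
  have hub := annulus_upper hAm hq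
    (hinj.mono hAsub) (c := d 2 * (s : ℂ) ^ 2) (by rwa [hcs])
    (R := 1 / s + (E + D * (D + E)) * s ^ 2) (by positivity) (by
      intro ω hω
      have hω0 := hA0 ω hω
      have ht0 : 0 < ‖ω‖ := norm_pos_iff.2 hω0
      have hinv : (starRingEnd ℂ) (1 / ω) = ω / (‖ω‖ : ℂ) ^ 2 := by
        rw [← Complex.mul_conj']
        have : (starRingEnd ℂ) ω ≠ 0 := by simpa using hω0
        rw [map_div₀, map_one]; field_simp
      have hq1 : p ω / ω = 1 / ω + (d 2 * ω + ω ^ 2 * k3 ω) := by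
        rw [hp ω (hAb ω hω)]; field_simp; ring
      have hrest : ‖d 2 * ω + ω ^ 2 * k3 ω‖ ≤ D * ‖ω‖ + E * ‖ω‖ ^ 2 := by
        refine (norm_add_le _ _).trans ?_
        rw [norm_mul, norm_mul, norm_pow]
        have := hE ω (by rw [mem_closedBall_zero_iff]; exact hω.2.le)
        have := mul_le_mul_of_nonneg_left this (sq_nonneg ‖ω‖)
        linarith
      have e : p ω / ω - d 2 * (s : ℂ) ^ 2 * (starRingEnd ℂ) (p ω / ω)
          = 1 / ω + d 2 * ω * (1 - (s : ℂ) ^ 2 / (‖ω‖ : ℂ) ^ 2) + ω ^ 2 * k3 ω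
            - d 2 * (s : ℂ) ^ 2 * (starRingEnd ℂ) (d 2 * ω + ω ^ 2 * k3 ω) := by
        rw [hq1, map_add, hinv]; ring
      rw [e]
      refine le_trans ?_ (ellipse_bound hD0 hE0 hs hω.1 (hω.2.trans hρ1) (by nlinarith))
      refine (norm_sub_le _ _).trans (add_le_add ((norm_add_le _ _).trans
        (add_le_add ((norm_add_le _ _).trans (add_le_add ?_ ?_)) ?_)) ?_)
      · simp
      · rw [norm_mul, norm_mul]
        have h1 : ‖(1 - (s : ℂ) ^ 2 / (‖ω‖ : ℂ) ^ 2)‖ = 1 - s ^ 2 / ‖ω‖ ^ 2 := by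
          have : (1 - (s : ℂ) ^ 2 / (‖ω‖ : ℂ) ^ 2) = ((1 - s ^ 2 / ‖ω‖ ^ 2 : ℝ) : ℂ) := by
            push_cast; ring
          rw [this, Complex.norm_real, Real.norm_of_nonneg]
          rw [sub_nonneg, div_le_one (by positivity)]
          exact pow_le_pow_left₀ hs.le hω.1.le 2
        rw [h1]
        apply le_of_eq
        rw [hDdef]
        field_simp
      · rw [norm_mul, norm_pow, mul_comm]
        exact mul_le_mul_of_nonneg_right (hE ω (by rw [mem_closedBall_zero_iff]; exact hω.2.le))
          (sq_nonneg _)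
      · rw [norm_mul, hcs, RCLike.norm_conj]
        exact mul_le_mul_of_nonneg_left hrest (by positivity))
  have hlb := annulus_lower Hh hs hsρ hρ1 (N + 2)
  rw [integral_annulus_terms hs hsρ (e := fun n => ‖((n : ℂ) - 1) * d n‖ ^ 2) (by simp [d0])
    (by simp) N] at hlb
  have hsum : ∑ k ∈ Finset.range N, ‖(((k + 2 : ℕ) : ℂ) - 1) * d (k + 2)‖ ^ 2 / (k + 1)
        * (ρ ^ (2 * k + 2) - s ^ (2 * k + 2))
      = ∑ k ∈ Finset.range N, (k + 1) * ‖d (k + 2)‖ ^ 2 * (ρ ^ (2 * k + 2) - s ^ (2 * k + 2)) := by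
    refine Finset.sum_congr rfl fun k _ => ?_
    have : (((k + 2 : ℕ) : ℂ) - 1) = ((k + 1 : ℝ) : ℂ) := by push_cast; ring
    have h0 : (0 : ℝ) ≤ k + 1 := by positivity
    rw [this, norm_mul, Complex.norm_real, Real.norm_of_nonneg h0]
    field_simp
  rw [hsum] at hlb
  have heq : ∀ ω, ‖h ω‖ ^ 2 / ‖ω‖ ^ 4 = ‖h ω / ω ^ 2‖ ^ 2 := by
    intro ω; rw [norm_div, norm_pow, div_pow]; ring
  simp only [heq] at hlb
  have hfin := (mul_le_mul_right hlb (ENNReal.ofReal (1 - ‖d 2 * (s : ℂ) ^ 2‖ ^ 2))).trans hub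
  rw [hcs, ← ENNReal.ofReal_mul (by nlinarith [mul_nonneg hD0 (sq_nonneg s)]),
    ENNReal.ofReal_le_ofReal_iff (by positivity)] at hfin
  have := pi_pos
  nlinarith

/-- Gronwall's area theorem, obtained from `area_at_radius` by `s → 0` and then `ρ → 1`. -/
lemma area_theorem {d : ℕ → ℂ} {p : ℂ → ℂ}
    (H : ∀ w ∈ ball (0 : ℂ) 1, HasSum (fun n => d n * w ^ n) (p w)) (d0 : d 0 = 1) (d1 : d 1 = 0)
    (hinj : Set.InjOn (fun ω => p ω / ω) (ball 0 1 \ {0})) (N : ℕ) :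
    ∑ k ∈ Finset.range N, (k + 1) * ‖d (k + 2)‖ ^ 2 ≤ 1 := by
  have hρ : ∀ ρ : ℝ, 0 < ρ → ρ < 1 →
      ∑ k ∈ Finset.range N, (k + 1) * ‖d (k + 2)‖ ^ 2 * ρ ^ (2 * k + 2) ≤ 1 / ρ ^ 2 := by
    intro ρ h0 h1
    obtain ⟨K, s₀, hs₀, hK⟩ := area_at_radius H d0 d1 hinj h0 h1
    set D := ‖d 2‖
    have hc1 : Continuous fun s : ℝ => -(D ^ 2 * s ^ 2) + (1 - (D * s ^ 2) ^ 2) * (- (1 / ρ ^ 2)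
        + ∑ k ∈ Finset.range N, (k + 1) * ‖d (k + 2)‖ ^ 2 * (ρ ^ (2 * k + 2) - s ^ (2 * k + 2))) := by
      fun_prop
    have hc2 : Continuous fun s : ℝ => 2 * K * s + K ^ 2 * s ^ 4 := by fun_prop
    have hle := le_of_tendsto_of_tendsto
      ((hc1.tendsto 0).mono_left (nhdsWithin_le_nhds (s := Set.Ioi 0)))
      ((hc2.tendsto 0).mono_left (nhdsWithin_le_nhds (s := Set.Ioi 0))) (by
        filter_upwards [Ioo_mem_nhdsGT hs₀] with s hs
        have := hK s hs.1 hs.2 N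
        have hs0 := hs.1.ne'
        have e1 : (1 / s + K * s ^ 2) ^ 2 = 1 / s ^ 2 + 2 * K * s + K ^ 2 * s ^ 4 := by
          field_simp; ring
        have e2 : (D * s ^ 2) ^ 2 * (1 / s ^ 2) = D ^ 2 * s ^ 2 := by field_simp
        rw [e1] at this
        linarith)
    simp at hle
    simpa using hle
  have hc1 : ContinuousAt (fun ρ : ℝ =>
      ∑ k ∈ Finset.range N, (k + 1) * ‖d (k + 2)‖ ^ 2 * ρ ^ (2 * k + 2)) 1 := by fun_prop
  have hc2 : ContinuousAt (fun ρ : ℝ => 1 / ρ ^ 2) 1 := by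
    apply ContinuousAt.div <;> first | fun_prop | norm_num
  have hle := le_of_tendsto_of_tendsto
    (hc1.tendsto.mono_left (nhdsWithin_le_nhds (s := Set.Iio 1)))
    (hc2.tendsto.mono_left (nhdsWithin_le_nhds (s := Set.Iio 1))) (by
      filter_upwards [Ioo_mem_nhdsLT (zero_lt_one' ℝ)] with ρ hr
      exact hρ ρ hr.1 hr.2)
  simpa using hle

/-- The area theorem for the injective map `ω ↦ ψ(ω²) / ω`, a square root of `1 / g(ω²)`. -/
lemma area_sqrt {g ψ : ℂ → ℂ} (hg : InClassS g)
    (hψ0 : ψ 0 = 1) (hgψ : ∀ w ∈ ball (0 : ℂ) 1, g w * ψ w ^ 2 = w) {c : ℕ → ℂ}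
    (hc : ∀ w ∈ ball (0 : ℂ) 1, HasSum (fun n => c n * w ^ n) (ψ w)) (N : ℕ) :
    ∑ m ∈ Finset.range N, (2 * m + 1) * ‖c (m + 1)‖ ^ 2 ≤ 1 := by
  have hsq : ∀ w ∈ ball (0 : ℂ) 1, w ^ 2 ∈ ball (0 : ℂ) 1 := by
    intro w hw
    rw [mem_ball_zero_iff] at hw ⊢
    rw [norm_pow]; nlinarith [norm_nonneg w]
  have hc0 : c 0 = 1 := by
    have h1 := hc 0 (mem_ball_self one_pos)
    have h2 := h1.unique (hasSum_single 0 fun n hn => by simp [hn])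
    simpa [hψ0] using h2.symm
  set d : ℕ → ℂ := fun n => if Even n then c (n / 2) else 0 with hd
  have Hd : ∀ w ∈ ball (0 : ℂ) 1, HasSum (fun n => d n * w ^ n) (ψ (w ^ 2)) := by
    intro w hw
    have h1 := hc (w ^ 2) (hsq w hw)
    have hi : Function.Injective (fun n : ℕ => 2 * n) := fun a b h => by simpa using h
    refine (hi.hasSum_iff (f := fun n => d n * w ^ n) ?_).1 (h1.congr_fun' fun n => ?_)
    · intro n hn
      have : ¬ Even n := fun ⟨k, hk⟩ => hn ⟨k, by simp; omega⟩
      simp [hd, this]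
    · simp [hd, ← pow_mul]
  have hinj : Set.InjOn (fun ω => ψ (ω ^ 2) / ω) (ball 0 1 \ {0}) := by
    intro x hx y hy hxy
    have hx0 : x ≠ 0 := hx.2
    have hy0 : y ≠ 0 := hy.2
    have ex := hgψ _ (hsq x hx.1)
    have ey := hgψ _ (hsq y hy.1)
    simp only [] at hxy
    have hxy' : ψ (x ^ 2) * y = ψ (y ^ 2) * x := by
      rw [div_eq_div_iff hx0 hy0] at hxy; exact hxy
    have hψx : ψ (x ^ 2) ≠ 0 := fun h => by
      rw [h] at ex; simp only [ne_eq, OfNat.ofNat_ne_zero, not_false_eq_true, zero_pow, mul_zero] at ex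
      exact pow_ne_zero 2 hx0 ex.symm
    have hgg : g (x ^ 2) = g (y ^ 2) := by
      have h1 : g (x ^ 2) * (ψ (x ^ 2) * y) ^ 2 = g (y ^ 2) * (ψ (x ^ 2) * y) ^ 2 := by
        calc _ = (g (x ^ 2) * ψ (x ^ 2) ^ 2) * y ^ 2 := by ring
          _ = (g (y ^ 2) * ψ (y ^ 2) ^ 2) * x ^ 2 := by rw [ex, ey]; ring
          _ = g (y ^ 2) * (ψ (y ^ 2) * x) ^ 2 := by ring
          _ = _ := by rw [hxy']
      exact mul_right_cancel₀ (pow_ne_zero 2 (mul_ne_zero hψx hy0)) h1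
    have hs : x ^ 2 = y ^ 2 := hg.2.1 (hsq x hx.1) (hsq y hy.1) hgg
    rw [hs] at hxy' hψx
    exact (mul_left_cancel₀ hψx hxy').symm
  have h2 := area_theorem Hd (by simp [hd, hc0]) (by simp [hd]) hinj (2 * N)
  refine le_trans ?_ h2
  have hi : ∀ x ∈ Finset.range N, ∀ y ∈ Finset.range N, 2 * x = 2 * y → x = y := by
    intro x _ y _ h; omega
  calc _ = ∑ k ∈ (Finset.range N).image (fun m : ℕ => 2 * m), ((k : ℝ) + 1) * ‖d (k + 2)‖ ^ 2 := by
        rw [Finset.sum_image hi]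
        refine Finset.sum_congr rfl fun m _ => ?_
        have : d (2 * m + 2) = c (m + 1) := by
          have : 2 * m + 2 = 2 * (m + 1) := by ring
          simp [hd, this]
        rw [this]; push_cast; ring
    _ ≤ _ := by
        refine Finset.sum_le_sum_of_subset_of_nonneg ?_ (fun k _ _ => by positivity)
        intro k hk
        simp only [Finset.mem_image, Finset.mem_range] at hk ⊢
        omega

/-! ### Cauchy-Schwarz estimates for coefficient tails -/

/-- Cauchy-Schwarz with the weights of the area theorem, applied to a linear functional of the
coefficients of index at least `2`. -/
lemma cs_tail {c l : ℕ → ℂ}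
    (hA : ∀ N, ∑ m ∈ Finset.range N, (2 * (m : ℝ) + 1) * ‖c (m + 1)‖ ^ 2 ≤ 1) {L : ℝ}
    (hL : ∀ N, ∑ m ∈ Finset.range N, ‖l m‖ ^ 2 / (2 * (m : ℝ) + 3) ≤ L) {s : ℂ}
    (hs : HasSum (fun m => c (m + 2) * l m) s) : ‖s‖ ^ 2 ≤ (1 - ‖c 1‖ ^ 2) * L := by
  have hA2 : ∀ N, ∑ m ∈ Finset.range N, (2 * (m : ℝ) + 3) * ‖c (m + 2)‖ ^ 2 ≤ 1 - ‖c 1‖ ^ 2 := by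
    intro N
    have := hA (N + 1)
    rw [Finset.sum_range_succ'] at this
    have e : ∑ m ∈ Finset.range N, (2 * ((m + 1 : ℕ) : ℝ) + 1) * ‖c (m + 1 + 1)‖ ^ 2
        = ∑ m ∈ Finset.range N, (2 * (m : ℝ) + 3) * ‖c (m + 2)‖ ^ 2 := by
      refine Finset.sum_congr rfl fun m _ => by push_cast; ring
    rw [e] at this
    simp at this
    linarith
  refine le_of_tendsto ((hs.tendsto_sum_nat.norm).pow 2) (Filter.Eventually.of_forall fun N => ?_)
  have h1 : ‖∑ m ∈ Finset.range N, c (m + 2) * l m‖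
      ≤ ∑ m ∈ Finset.range N, ‖c (m + 2)‖ * ‖l m‖ :=
    (norm_sum_le _ _).trans (Finset.sum_le_sum fun m _ => (norm_mul _ _).le)
  have h2 : (∑ m ∈ Finset.range N, ‖c (m + 2)‖ * ‖l m‖) ^ 2
      ≤ (∑ m ∈ Finset.range N, (2 * (m : ℝ) + 3) * ‖c (m + 2)‖ ^ 2)
        * ∑ m ∈ Finset.range N, ‖l m‖ ^ 2 / (2 * (m : ℝ) + 3) := by
    apply Finset.sum_sq_le_sum_mul_sum_of_sq_le_mul
    · intro i _; positivity
    · intro i _; positivity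
    · intro i _; exact le_of_eq (by field_simp)
  have h3 : 0 ≤ ∑ m ∈ Finset.range N, ‖l m‖ ^ 2 / (2 * (m : ℝ) + 3) :=
    Finset.sum_nonneg fun i _ => by positivity
  have h4 : 0 ≤ 1 - ‖c 1‖ ^ 2 := by simpa using hA2 0
  calc _ ≤ (∑ m ∈ Finset.range N, ‖c (m + 2)‖ * ‖l m‖) ^ 2 :=
        pow_le_pow_left₀ (norm_nonneg _) h1 2
    _ ≤ _ := h2
    _ ≤ (1 - ‖c 1‖ ^ 2) * ∑ m ∈ Finset.range N, ‖l m‖ ^ 2 / (2 * (m : ℝ) + 3) :=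
        mul_le_mul_of_nonneg_right (hA2 N) h3
    _ ≤ _ := mul_le_mul_of_nonneg_left (hL N) h4

/-- Upper bound for `∑_{m ≥ 2} x ^ m / (2 m - 1)`. -/
noncomputable def tailZero (x : ℝ) : ℝ := x ^ 2 / 3 + x ^ 3 / 5 + x ^ 4 / (7 * (1 - x))

/-- Upper bound for `∑_{m ≥ 2} (m (m - 1)) ^ 2 x ^ m / (2 m - 1)`. -/
noncomputable def tailTwo (x : ℝ) : ℝ :=
  4 / 3 * x ^ 2 + 36 / 5 * x ^ 3 + 144 / 7 * x ^ 4 + 400 / 9 * x ^ 5 / (1 - 2 * x)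

lemma sum_le_tailZero {x : ℝ} (hx0 : 0 ≤ x) (hx1 : x < 1) (N : ℕ) :
    ∑ m ∈ Finset.range N, x ^ (m + 2) / (2 * (m : ℝ) + 3) ≤ tailZero x := by
  have h1 : 0 < 1 - x := by linarith
  have key : ∀ N : ℕ, ∑ m ∈ Finset.range (N + 2), x ^ (m + 2) / (2 * (m : ℝ) + 3)
      + x ^ (N + 4) / (7 * (1 - x)) ≤ tailZero x := by
    intro N
    induction N with
    | zero => simp [Finset.sum_range_succ, tailZero]; norm_num
    | succ N ih =>
      rw [Finset.sum_range_succ]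
      refine le_trans ?_ ih
      have e : x ^ (N + 4) / (7 * (1 - x)) = x ^ (N + 4) / 7 + x ^ (N + 5) / (7 * (1 - x)) := by
        field_simp; ring
      have h2 : x ^ (N + 4) / (2 * ((N + 2 : ℕ) : ℝ) + 3) ≤ x ^ (N + 4) / 7 := by
        apply div_le_div_of_nonneg_left (by positivity) (by norm_num)
        push_cast; linarith [(Nat.cast_nonneg N : (0:ℝ) ≤ N)]
      have e3 : N + 2 + 2 = N + 4 := by ring
      have e4 : N + 1 + 4 = N + 5 := by ring
      rw [e, e3, e4]
      linarith
  have h2 := key N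
  have h3 : ∑ m ∈ Finset.range N, x ^ (m + 2) / (2 * (m : ℝ) + 3)
      ≤ ∑ m ∈ Finset.range (N + 2), x ^ (m + 2) / (2 * (m : ℝ) + 3) :=
    Finset.sum_le_sum_of_subset_of_nonneg (Finset.range_mono (by omega))
      (fun k _ _ => by positivity)
  have : 0 ≤ x ^ (N + 4) / (7 * (1 - x)) := by positivity
  linarith

lemma coeff_growth (N : ℕ) :
    (((N : ℝ) + 5) * (N + 4)) ^ 2 / (2 * N + 9) ≤ 400 / 9 * 2 ^ N := by
  induction N with
  | zero => norm_num
  | succ N ih =>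
    have h0 : (0 : ℝ) ≤ N := Nat.cast_nonneg N
    rw [div_le_iff₀ (by positivity)] at ih ⊢
    push_cast
    have h1 : ((N : ℝ) + 6) ^ 2 * (2 * N + 9) ≤ 2 * ((N + 4) ^ 2 * (2 * N + 11)) := by
      nlinarith [mul_nonneg h0 h0, mul_nonneg (mul_nonneg h0 h0) h0]
    have h2 := mul_le_mul_of_nonneg_left h1 (sq_nonneg ((N : ℝ) + 5))
    have h3 := mul_le_mul_of_nonneg_right ih (by positivity : (0 : ℝ) ≤ 2 * (2 * N + 11))
    have h4 : (((N : ℝ) + 1 + 5) * (N + 1 + 4)) ^ 2 * (2 * N + 9)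
        ≤ (400 / 9 * 2 ^ (N + 1) * (2 * (N + 1) + 9)) * (2 * N + 9) := by
      have e : (2 : ℝ) ^ (N + 1) = 2 * 2 ^ N := by ring
      rw [e]
      calc _ = ((N : ℝ) + 5) ^ 2 * ((N + 6) ^ 2 * (2 * N + 9)) := by ring
        _ ≤ _ := h2
        _ = (((N : ℝ) + 5) * (N + 4)) ^ 2 * (2 * (2 * N + 11)) := by ring
        _ ≤ _ := h3
        _ = _ := by ring
    exact le_of_mul_le_mul_right h4 (by positivity)

lemma sum_le_tailTwo {x : ℝ} (hx0 : 0 ≤ x) (hx1 : x < 1 / 2) (N : ℕ) :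
    ∑ m ∈ Finset.range N, (((m : ℝ) + 2) * (m + 1)) ^ 2 * x ^ (m + 2) / (2 * (m : ℝ) + 3)
      ≤ tailTwo x := by
  have h1 : 0 < 1 - 2 * x := by linarith
  have key : ∀ N : ℕ, ∑ m ∈ Finset.range (N + 3),
        (((m : ℝ) + 2) * (m + 1)) ^ 2 * x ^ (m + 2) / (2 * (m : ℝ) + 3)
      + 400 / 9 * 2 ^ N * x ^ (N + 5) / (1 - 2 * x) ≤ tailTwo x := by
    intro N
    induction N with
    | zero => simp [Finset.sum_range_succ, tailTwo]; norm_num; apply le_of_eq; ring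
    | succ N ih =>
      rw [Finset.sum_range_succ]
      refine le_trans ?_ ih
      have e : 400 / 9 * 2 ^ N * x ^ (N + 5) / (1 - 2 * x) = 400 / 9 * 2 ^ N * x ^ (N + 5)
          + 400 / 9 * 2 ^ (N + 1) * x ^ (N + 6) / (1 - 2 * x) := by
        field_simp; ring
      have h2 : ((((N + 3 : ℕ) : ℝ) + 2) * ((N + 3 : ℕ) + 1)) ^ 2 * x ^ (N + 5)
          / (2 * ((N + 3 : ℕ) : ℝ) + 3) ≤ 400 / 9 * 2 ^ N * x ^ (N + 5) := by
        have := mul_le_mul_of_nonneg_right (coeff_growth N) (pow_nonneg hx0 (N + 5))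
        refine le_trans (le_of_eq ?_) this
        push_cast
        rw [show (2 * ((N : ℝ) + 3) + 3) = 2 * N + 9 by ring]
        ring
      have e3 : N + 3 + 2 = N + 5 := by ring
      have e4 : N + 1 + 5 = N + 6 := by ring
      rw [e, e3, e4]
      linarith
  have h2 := key N
  have h3 : ∑ m ∈ Finset.range N, (((m : ℝ) + 2) * (m + 1)) ^ 2 * x ^ (m + 2) / (2 * (m : ℝ) + 3)
      ≤ ∑ m ∈ Finset.range (N + 3),
        (((m : ℝ) + 2) * (m + 1)) ^ 2 * x ^ (m + 2) / (2 * (m : ℝ) + 3) :=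
    Finset.sum_le_sum_of_subset_of_nonneg (Finset.range_mono (by omega))
      (fun k _ _ => by positivity)
  have : 0 ≤ 400 / 9 * 2 ^ N * x ^ (N + 5) / (1 - 2 * x) := by positivity
  linarith

/-! ### Bounds for the square-root transform -/

/-- The equation `g ψ² = w` differentiated once and twice. -/
lemma sqrt_transform_identities {g ψ : ℂ → ℂ} (hg : AnalyticOnNhd ℂ g (ball 0 1))
    (hψ : DifferentiableOn ℂ ψ (ball 0 1))
    (hgψ : ∀ w ∈ ball (0 : ℂ) 1, g w * ψ w ^ 2 = w) :
    (∀ w ∈ ball (0 : ℂ) 1, deriv g w * ψ w ^ 2 + 2 * g w * ψ w * deriv ψ w = 1) ∧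
    (∀ w ∈ ball (0 : ℂ) 1, deriv (deriv g) w * ψ w ^ 2 + 4 * deriv g w * ψ w * deriv ψ w
      + 2 * g w * (deriv ψ w ^ 2 + ψ w * deriv (deriv ψ) w) = 0) := by
  have hψa : AnalyticOnNhd ℂ ψ (ball 0 1) := hψ.analyticOnNhd isOpen_ball
  have id1 : ∀ w ∈ ball (0 : ℂ) 1, deriv g w * ψ w ^ 2 + 2 * g w * ψ w * deriv ψ w = 1 := by
    intro w hw
    have e : (fun w => g w * ψ w ^ 2) =ᶠ[nhds w] fun w => w := by
      filter_upwards [isOpen_ball.mem_nhds hw] with y hy using hgψ y hy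
    have h1 := ((hg w hw).differentiableAt.hasDerivAt).mul
      (((hψa w hw).differentiableAt.hasDerivAt).pow 2)
    have h2 : HasDerivAt (fun w => g w * ψ w ^ 2) 1 w := (hasDerivAt_id' w).congr_of_eventuallyEq e
    have h3 := h1.unique h2
    rw [← h3]; push_cast; simp; ring
  refine ⟨id1, fun w hw => ?_⟩
  have e : (fun w => deriv g w * ψ w ^ 2 + 2 * g w * ψ w * deriv ψ w) =ᶠ[nhds w] fun w => 1 := by
    filter_upwards [isOpen_ball.mem_nhds hw] with y hy using id1 y hy
  have dg := (hg w hw).differentiableAt.hasDerivAt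
  have dp := (hψa w hw).differentiableAt.hasDerivAt
  have dg2 := (hg w hw).deriv.differentiableAt.hasDerivAt
  have dp2 := (hψa w hw).deriv.differentiableAt.hasDerivAt
  have h1 := (dg2.mul (dp.pow 2)).add (((dg.const_mul 2).mul dp).mul dp2)
  have h2 : HasDerivAt (fun w => deriv g w * ψ w ^ 2 + 2 * g w * ψ w * deriv ψ w) 0 w :=
    (hasDerivAt_const w (1 : ℂ)).congr_of_eventuallyEq e
  have h3 := h1.unique h2
  rw [← h3]; push_cast; simp; ring

/-- The square-root transform together with the consequences of the area theorem for its first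
coefficient, its tail and its second derivative. -/
lemma sqrt_transform_bounds {g : ℂ → ℂ} (hg : InClassS g) :
    ∃ ψ : ℂ → ℂ, DifferentiableOn ℂ ψ (ball 0 1) ∧ ψ 0 = 1 ∧
      (∀ w ∈ ball (0 : ℂ) 1, g w * ψ w ^ 2 = w) ∧
      ‖deriv ψ 0‖ ≤ 1 ∧ deriv (deriv g) 0 = -4 * deriv ψ 0 ∧
      (∀ w ∈ ball (0 : ℂ) 1, ‖ψ w - 1 - deriv ψ 0 * w‖ ^ 2
        ≤ (1 - ‖deriv ψ 0‖ ^ 2) * tailZero (‖w‖ ^ 2)) ∧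
      (∀ w ∈ ball (0 : ℂ) 1, ‖w‖ ^ 2 < 1 / 2 → ‖w ^ 2 * deriv (deriv ψ) w‖ ^ 2
        ≤ (1 - ‖deriv ψ 0‖ ^ 2) * tailTwo (‖w‖ ^ 2)) := by
  obtain ⟨ψ, hψ, hψ0, hgψ⟩ := exists_sqrt_transform hg
  have m0 : (0 : ℂ) ∈ ball (0 : ℂ) 1 := mem_ball_self one_pos
  set c : ℕ → ℂ := fun n => iteratedDeriv n ψ 0 / (n.factorial : ℂ) with hcdef
  have hc : ∀ w ∈ ball (0 : ℂ) 1, HasSum (fun n => c n * w ^ n) (ψ w) := hasSum_taylor_unit hψ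
  have hA := area_sqrt hg hψ0 hgψ hc
  have c0 : c 0 = 1 := by simp [hcdef, hψ0]
  have c1 : c 1 = deriv ψ 0 := by simp [hcdef, iteratedDeriv_one]
  refine ⟨ψ, hψ, hψ0, hgψ, ?_, ?_, ?_, ?_⟩
  · have := hA 1
    simp only [Finset.range_one, Finset.sum_singleton, zero_add, c1] at this
    norm_num at this
    exact this
  · have := (sqrt_transform_identities hg.1 hψ hgψ).2 0 m0
    rw [hψ0, hg.2.2.1, hg.2.2.2] at this
    linear_combination this
  · intro w hw
    rw [← c1]
    have hx : ‖w‖ ^ 2 < 1 := by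
      rw [mem_ball_zero_iff] at hw; nlinarith [norm_nonneg w]
    refine cs_tail (l := fun m => w ^ (m + 2)) hA (fun N => ?_) ?_
    · refine le_trans (le_of_eq ?_) (sum_le_tailZero (sq_nonneg ‖w‖) hx N)
      refine Finset.sum_congr rfl fun m _ => ?_
      rw [norm_pow, ← pow_mul, ← pow_mul, mul_comm]
    · have := (hasSum_nat_add_iff' 2).mpr (hc w hw)
      simpa [Finset.sum_range_succ, c0, sub_add_eq_sub_sub] using this
  · intro w hw hx
    rw [← c1]
    refine cs_tail (l := fun m : ℕ => ((m : ℂ) + 2) * (m + 1) * w ^ (m + 2)) hA (fun N => ?_) ?_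
    · refine le_trans (le_of_eq ?_) (sum_le_tailTwo (sq_nonneg ‖w‖) hx N)
      refine Finset.sum_congr rfl fun m _ => ?_
      have e1 : ‖(m : ℂ) + 2‖ = m + 2 := by exact_mod_cast Complex.norm_natCast (m + 2)
      have e2 : ‖(m : ℂ) + 1‖ = m + 1 := by exact_mod_cast Complex.norm_natCast (m + 1)
      rw [norm_mul, norm_mul, e1, e2, norm_pow]
      ring
    · have := (hasSum_deriv (hasSum_deriv hc) w hw).mul_left (w ^ 2)
      refine HasSum.congr_fun' this fun n => ?_
      push_cast; ring

/-! ### The Koebe transform -/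

/-- The Koebe transform `g(w) = (f((w + z) / (1 + z̄ w)) - f(z)) / ((1 - |z|²) f'(z))`, with its second
derivative at `0` and its value at `-z`. -/
lemma koebe_transform {f : ℂ → ℂ} (hf : InClassS f) {z : ℂ} (hz : z ∈ ball (0 : ℂ) 1) :
    ∃ g : ℂ → ℂ, InClassS g ∧
      deriv (deriv g) 0
        = (1 - (‖z‖ : ℂ) ^ 2) * (deriv (deriv f) z / deriv f z) - 2 * (starRingEnd ℂ) z ∧
      g (-z) = -(f z / (deriv f z * (1 - (‖z‖ : ℂ) ^ 2))) := by
  obtain ⟨ha, hinj, h0, h1⟩ := hf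
  set s := (starRingEnd ℂ) z with hs
  have hzn : ‖z‖ < 1 := mem_ball_zero_iff.mp hz
  have hsn : ‖s‖ = ‖z‖ := RCLike.norm_conj z
  have hzs : z * s = (‖z‖ : ℂ) ^ 2 := by rw [hs, Complex.mul_conj, Complex.normSq_eq_norm_sq]; simp
  have hx : (1 : ℂ) - (‖z‖ : ℂ) ^ 2 ≠ 0 := by
    have : (0 : ℝ) < 1 - ‖z‖ ^ 2 := by nlinarith [norm_nonneg z]
    exact_mod_cast this.ne'
  have hf' : deriv f z ≠ 0 := deriv_ne_zero_of_injOn isOpen_ball ha hinj hz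
  have hden : ∀ w ∈ ball (0 : ℂ) 1, 1 + s * w ≠ 0 := by
    intro w hw h
    have hw := mem_ball_zero_iff.mp hw
    have h2 : ‖s * w‖ = 1 := by
      rw [show s * w = -1 by linear_combination h]; simp
    rw [norm_mul, hsn] at h2
    nlinarith [norm_nonneg z, norm_nonneg w]
  set φ : ℂ → ℂ := fun w => (w + z) / (1 + s * w) with hφ
  have hφm : ∀ w ∈ ball (0 : ℂ) 1, φ w ∈ ball (0 : ℂ) 1 := by
    intro w hw
    have hd := hden w hw
    have hw := mem_ball_zero_iff.mp hw
    rw [mem_ball_zero_iff, hφ]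
    simp only [norm_div]
    rw [div_lt_one (norm_pos_iff.mpr hd)]
    refine lt_of_pow_lt_pow_left₀ 2 (norm_nonneg _) ?_
    have e : ‖1 + s * w‖ ^ 2 - ‖w + z‖ ^ 2 = (1 - ‖z‖ ^ 2) * (1 - ‖w‖ ^ 2) := by
      simp only [← Complex.normSq_eq_norm_sq, Complex.normSq_apply, hs]
      simp
      ring
    have : 0 < (1 - ‖z‖ ^ 2) * (1 - ‖w‖ ^ 2) := by
      apply mul_pos <;> nlinarith [norm_nonneg z, norm_nonneg w]
    linarith
  have hφd : ∀ w ∈ ball (0 : ℂ) 1,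
      HasDerivAt φ ((1 - (‖z‖ : ℂ) ^ 2) / (1 + s * w) ^ 2) w := by
    intro w hw
    have := ((hasDerivAt_id' w).add_const z).div
      (((hasDerivAt_id' w).const_mul s).const_add 1) (hden w hw)
    refine HasDerivAt.congr_deriv this ?_
    rw [← hzs]; ring
  have hφ0 : φ 0 = z := by simp [hφ]
  have hφz : φ (-z) = 0 := by simp [hφ]
  set g : ℂ → ℂ := fun w => (f (φ w) - f z) / (deriv f z * (1 - (‖z‖ : ℂ) ^ 2)) with hg
  have hgd : ∀ w ∈ ball (0 : ℂ) 1,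
      HasDerivAt g (deriv f (φ w) / (deriv f z * (1 + s * w) ^ 2)) w := by
    intro w hw
    have hd := hden w hw
    have := (((ha _ (hφm w hw)).differentiableAt.hasDerivAt.comp w (hφd w hw)).sub_const
      (f z)).div_const (deriv f z * (1 - (‖z‖ : ℂ) ^ 2))
    refine HasDerivAt.congr_deriv this ?_
    field_simp
  have m0 : (0 : ℂ) ∈ ball (0 : ℂ) 1 := mem_ball_self one_pos
  refine ⟨g, ⟨?_, ?_, ?_, ?_⟩, ?_, ?_⟩
  · exact DifferentiableOn.analyticOnNhd
      (fun w hw => (hgd w hw).differentiableAt.differentiableWithinAt) isOpen_ball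
  · intro w hw w' hw' h
    have hd := hden w hw
    have hd' := hden w' hw'
    simp only [hg] at h
    rw [div_left_inj' (mul_ne_zero hf' hx)] at h
    have h2 := hinj (hφm w hw) (hφm w' hw') (sub_left_inj.mp h)
    simp only [hφ] at h2
    rw [div_eq_div_iff hd hd'] at h2
    have h3 : (w - w') * (1 - (‖z‖ : ℂ) ^ 2) = 0 := by rw [← hzs]; linear_combination h2
    exact sub_eq_zero.mp ((mul_eq_zero.mp h3).resolve_right hx)
  · simp [hg, hφ0]
  · rw [(hgd 0 m0).deriv, hφ0]; simp [hf']
  · have e : deriv g =ᶠ[nhds 0] fun w => deriv f (φ w) / (deriv f z * (1 + s * w) ^ 2) := by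
      filter_upwards [isOpen_ball.mem_nhds m0] with w hw using (hgd w hw).deriv
    rw [e.deriv_eq]
    have d1 : HasDerivAt (fun w => deriv f (φ w)) (deriv (deriv f) z * (1 - (‖z‖ : ℂ) ^ 2)) 0 := by
      have h1 := (ha _ (hφm 0 m0)).deriv.differentiableAt.hasDerivAt.comp 0 (hφd 0 m0)
      rw [hφ0] at h1
      exact HasDerivAt.congr_deriv h1 (by simp)
    have d2 : HasDerivAt (fun w => deriv f z * (1 + s * w) ^ 2) (deriv f z * (2 * s)) 0 := by
      have := ((((hasDerivAt_id' (0 : ℂ)).const_mul s).const_add 1).pow 2).const_mul (deriv f z)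
      simpa using this
    have := (d1.div d2 (by simpa using hf')).deriv
    refine this.trans ?_
    rw [hφ0]
    simp
    field_simp
  · simp only [hg, hφz, h0]
    rw [zero_sub, neg_div]

/-! ### The defect function -/

/-- The defect `P' (z / P) ^ 2 - 1` of `P = f / f'`, written in terms of `f` and its derivatives. -/
noncomputable def uDefect (f : ℂ → ℂ) (z : ℂ) : ℂ :=
  (z * deriv f z / f z) ^ 2 - z ^ 2 * deriv (deriv f) z / f z - 1

lemma InClassS.ne_zero {f : ℂ → ℂ} (hf : InClassS f) {z : ℂ} (hz : z ∈ ball (0 : ℂ) 1)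
    (hz0 : z ≠ 0) : f z ≠ 0 := fun h =>
  hz0 (hf.2.1 hz (mem_ball_self one_pos) (h.trans hf.2.2.1.symm))

lemma InClassS.deriv_ne_zero {f : ℂ → ℂ} (hf : InClassS f) {z : ℂ} (hz : z ∈ ball (0 : ℂ) 1) :
    deriv f z ≠ 0 := deriv_ne_zero_of_injOn isOpen_ball hf.1 hf.2.1 hz

lemma uDefect_eq {f : ℂ → ℂ} (hf : InClassS f) {z : ℂ} (hz : z ∈ ball (0 : ℂ) 1)
    (hz0 : z ≠ 0) :
    deriv (fun w => f w / deriv f w) z * (z / (f z / deriv f z)) ^ 2 - 1 = uDefect f z := by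
  have h1 := hf.ne_zero hz hz0
  have h2 := hf.deriv_ne_zero hz
  have := ((hf.1 z hz).differentiableAt.hasDerivAt.div
    (hf.1 z hz).deriv.differentiableAt.hasDerivAt h2).deriv
  change deriv (fun w => f w / deriv f w) z = _ at this
  rw [this, uDefect]
  field_simp

/-- The defect in terms of the square-root transform `ψ` of the Koebe transform of `f` at `z`: here
`u = ψ'(0) z`, and `τ` is the tail of `ψ` at `-z`, so `ψ(-z) = 1 - u + τ`. -/
lemma koebe_data {f : ℂ → ℂ} (hf : InClassS f) {z : ℂ} (hz : z ∈ ball (0 : ℂ) 1) (hz0 : z ≠ 0)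
    {x : ℝ} (hx : x = ‖z‖ ^ 2) :
    ∃ u τ : ℂ, (1 - u + τ) ^ 2 = (1 - x) * (z * deriv f z / f z) ∧
      (1 - x) ^ 2 * (uDefect f z + 1) = (1 - u + τ) ^ 4 + (1 - u + τ) ^ 2 * (4 * u - 2 * x) ∧
      ‖τ‖ ^ 2 * x ≤ (x - ‖u‖ ^ 2) * tailZero x ∧ ‖u‖ ^ 2 ≤ x := by
  obtain ⟨g, hg, hg2, hgz⟩ := koebe_transform hf hz
  obtain ⟨ψ, -, -, hgψ, hc, hc2, hτ, -⟩ := sqrt_transform_bounds hg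
  have h1 := hf.ne_zero hz hz0
  have h2 := hf.deriv_ne_zero hz
  have hmz : -z ∈ ball (0 : ℂ) 1 := by simpa using hz
  have hz1 : ‖z‖ < 1 := mem_ball_zero_iff.mp hz
  have hxc : ((‖z‖ : ℂ)) ^ 2 = (x : ℂ) := by rw [hx]; push_cast; rfl
  have hzs : z * (starRingEnd ℂ) z = (x : ℂ) := by
    rw [Complex.mul_conj, Complex.normSq_eq_norm_sq, hx]
  rw [hxc] at hg2 hgz
  have hx1 : (1 : ℂ) - x ≠ 0 := by
    have : (0 : ℝ) < 1 - x := by rw [hx]; nlinarith [norm_nonneg z]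
    exact_mod_cast this.ne'
  have hx0 : 0 ≤ x := by rw [hx]; positivity
  set c := deriv ψ 0
  have e1 : ψ (-z) ^ 2 = (1 - x) * (z * deriv f z / f z) := by
    have := hgψ _ hmz
    rw [hgz] at this
    field_simp at this ⊢
    linear_combination -this
  have ep : 1 - c * z + (ψ (-z) - 1 - c * (-z)) = ψ (-z) := by ring
  refine ⟨c * z, ψ (-z) - 1 - c * (-z), ?_, ?_, ?_, ?_⟩
  · rw [ep, e1]
  · rw [ep]
    have e2 : (1 - (x : ℂ)) * (deriv (deriv f) z / deriv f z)
        = 2 * (starRingEnd ℂ) z - 4 * c := by linear_combination -hg2 + hc2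
    have e3 : (1 - (x : ℂ)) ^ 2 * (uDefect f z + 1)
        = ((1 - x) * (z * deriv f z / f z)) ^ 2 - ((1 - x) * (z * deriv f z / f z))
          * (z * ((1 - (x : ℂ)) * (deriv (deriv f) z / deriv f z))) := by
      rw [uDefect]; field_simp; ring
    rw [e3, e2, ← e1, ← hzs]; ring
  · have := hτ _ hmz
    rw [norm_neg, ← hx] at this
    rw [norm_mul, mul_pow, ← hx]
    calc _ ≤ (1 - ‖c‖ ^ 2) * tailZero x * x := mul_le_mul_of_nonneg_right this hx0
      _ = _ := by ring
  · rw [norm_mul, mul_pow, ← hx]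
    have : ‖c‖ ^ 2 ≤ 1 := by nlinarith [norm_nonneg c]
    nlinarith

/-! ### The majorant -/

/-- `|m₀ + m₁ v + m₂ v² + m₃ v³ + m₄ v⁴|²` for real `mᵢ`, as a polynomial in `a = Re v` and
`s = |v|²`. -/
def quarticNormSq (m₀ m₁ m₂ m₃ m₄ a s : ℝ) : ℝ :=
  m₀ ^ 2 + m₁ ^ 2 * s + m₂ ^ 2 * s ^ 2 + m₃ ^ 2 * s ^ 3 + m₄ ^ 2 * s ^ 4
    + 2 * m₀ * m₁ * a + 2 * m₀ * m₂ * (2 * a ^ 2 - s) + 2 * m₁ * m₂ * s * a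
    + 2 * m₀ * m₃ * (4 * a ^ 3 - 3 * a * s) + 2 * m₁ * m₃ * s * (2 * a ^ 2 - s)
    + 2 * m₂ * m₃ * s ^ 2 * a + 2 * m₀ * m₄ * (8 * a ^ 4 - 8 * a ^ 2 * s + s ^ 2)
    + 2 * m₁ * m₄ * s * (4 * a ^ 3 - 3 * a * s) + 2 * m₂ * m₄ * s ^ 2 * (2 * a ^ 2 - s)
    + 2 * m₃ * m₄ * s ^ 3 * a

lemma norm_quartic_sq (m₀ m₁ m₂ m₃ m₄ : ℝ) (v : ℂ) :
    ‖(m₀ : ℂ) + m₁ * v + m₂ * v ^ 2 + m₃ * v ^ 3 + m₄ * v ^ 4‖ ^ 2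
      = quarticNormSq m₀ m₁ m₂ m₃ m₄ v.re (‖v‖ ^ 2) := by
  rw [← Complex.normSq_eq_norm_sq, ← Complex.normSq_eq_norm_sq, quarticNormSq]
  obtain ⟨a, b⟩ := v
  simp only [Complex.normSq_apply]
  simp [pow_succ]
  ring

/-- The majorant of `(1 - x)² |P' (z / P)² - 1|` in terms of `a = Re v`, `s = |v|²`. -/
noncomputable def majorant (x k q y a s : ℝ) : ℝ :=
  (quarticNormSq (x ^ 2) (4 * x - 4 * k) (2 + 2 * x - 8 * k) (-4 * k) (-1) a s / y + y) / 2
    + 2 * (1 + 2 * a + s) * (k * (x - (1 - k) * s) / q + q)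

lemma norm_le_half {n S q : ℝ} (hq : 0 < q) (h : n ^ 2 ≤ S) : n ≤ (S / q + q) / 2 := by
  have h1 : n ^ 2 / q ≤ S / q := div_le_div_of_nonneg_right h hq.le
  have h2 : 0 ≤ (n - q) ^ 2 / q := by positivity
  have h3 : (n - q) ^ 2 / q = n ^ 2 / q - 2 * n + q := by field_simp; ring
  linarith

/-- With `v = τ - u` write `τ = k v + (τ - k v)`. The defect is then a quartic polynomial in `v` plus a
multiple of `τ - k v`, and the bounds on `u` and `τ` control `τ - k v` by `|v|`. Both norms are
replaced by polynomials through `2 n ≤ n² / q + q`. -/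
lemma majorant_bound {x k q y : ℝ} (hk0 : 0 < k) (hk1 : k < 1) (hx : 0 < x) (hq : 0 < q)
    (hy : 0 < y) {u τ T : ℂ} {t : ℝ} (ht : t * (1 - k) ≤ k * x)
    (hT : (1 - x) ^ 2 * (T + 1) = (1 - u + τ) ^ 4 + (1 - u + τ) ^ 2 * (4 * u - 2 * x))
    (hτ : ‖τ‖ ^ 2 * x ≤ (x - ‖u‖ ^ 2) * t) (hu : ‖u‖ ^ 2 ≤ x) :
    (1 - k) * ‖τ - u‖ ^ 2 ≤ x ∧
    (1 - x) ^ 2 * ‖T‖ ≤ majorant x k q y (τ - u).re (‖τ - u‖ ^ 2) := by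
  set v := τ - u with hv
  have h1 : (1 - k) * ‖τ‖ ^ 2 ≤ k * (x - ‖u‖ ^ 2) := by
    have e1 := mul_le_mul_of_nonneg_right hτ (by linarith : 0 ≤ 1 - k)
    have e2 := mul_le_mul_of_nonneg_left ht (by linarith : 0 ≤ x - ‖u‖ ^ 2)
    have e3 : ((1 - k) * ‖τ‖ ^ 2) * x ≤ (k * (x - ‖u‖ ^ 2)) * x := by linarith
    exact le_of_mul_le_mul_right e3 hx
  have h2 : ‖τ - k * v‖ ^ 2 + k * (1 - k) * ‖v‖ ^ 2 = (1 - k) * ‖τ‖ ^ 2 + k * ‖u‖ ^ 2 := by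
    simp only [← Complex.normSq_eq_norm_sq, Complex.normSq_apply, hv]
    simp
    ring
  have h3 : ‖τ - k * v‖ ^ 2 ≤ k * (x - (1 - k) * ‖v‖ ^ 2) := by linarith
  have h4 := norm_le_half hq h3
  set M : ℂ := ((x ^ 2 : ℝ) : ℂ) + ((4 * x - 4 * k : ℝ) : ℂ) * v
    + ((2 + 2 * x - 8 * k : ℝ) : ℂ) * v ^ 2 + ((-4 * k : ℝ) : ℂ) * v ^ 3
    + ((-1 : ℝ) : ℂ) * v ^ 4 with hM
  have h5 := norm_le_half hy (norm_quartic_sq (x ^ 2) (4 * x - 4 * k) (2 + 2 * x - 8 * k)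
    (-4 * k) (-1) v).le
  rw [← hM] at h5
  have h6 : ((1 - x : ℝ) : ℂ) ^ 2 * T = -M + 4 * (1 + v) ^ 2 * (τ - k * v) := by
    have eu : u = τ - v := by rw [hv]; ring
    rw [eu] at hT
    rw [hM]
    push_cast
    linear_combination hT
  have h7 : (1 - x) ^ 2 * ‖T‖ = ‖((1 - x : ℝ) : ℂ) ^ 2 * T‖ := by
    rw [norm_mul, norm_pow, Complex.norm_real, Real.norm_eq_abs, sq_abs]
  have h8 : ‖1 + v‖ ^ 2 = 1 + 2 * v.re + ‖v‖ ^ 2 := by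
    simp only [← Complex.normSq_eq_norm_sq, Complex.normSq_apply]
    simp
    ring
  constructor
  · by_contra! h
    nlinarith [sq_nonneg ‖τ - k * v‖]
  · rw [h7, h6, majorant]
    calc _ ≤ ‖M‖ + 4 * ‖1 + v‖ ^ 2 * ‖τ - k * v‖ := by
          refine (norm_add_le _ _).trans (le_of_eq ?_)
          rw [norm_neg, norm_mul, norm_mul, norm_pow]
          norm_num
      _ ≤ _ := by
          have := mul_le_mul_of_nonneg_left h4 (by positivity : 0 ≤ 4 * ‖1 + v‖ ^ 2)
          rw [h8] at this ⊢
          linarith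

/-! ### Numerical bounds for the majorant -/

/-- Lower bound for half the difference quotient, in `a`, of `quarticNormSq` with last coefficients
`-n` and `-1`, between `a` and `ρ`. -/
lemma slope_lower {m₀ m₁ m₂ n a ρ : ℝ} (h0 : 0.0234 ≤ m₀) (h0' : m₀ ≤ 0.0249) (h1 : 0.39 ≤ m₁)
    (h1' : m₁ ≤ 0.417) (h2 : 1.866 ≤ m₂) (h2' : m₂ ≤ 1.8886) (hn : 0 ≤ n) (hn' : n ≤ 0.22)
    (ha : -ρ ≤ a) (ha' : a ≤ ρ) (hρ : ρ ^ 2 ≤ 1 / 6) :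
    -0.064 ≤ m₀ * m₁ + m₁ * m₂ * ρ ^ 2
      + 2 * (a + ρ) * (m₀ * m₂ - m₁ * n * ρ ^ 2 - 4 * m₀ * a ^ 2 - m₂ * (ρ ^ 2) ^ 2)
      - (m₀ * n + m₁ * ρ ^ 2) * (4 * (a ^ 2 + a * ρ + ρ ^ 2) - 3 * ρ ^ 2)
      - m₂ * n * (ρ ^ 2) ^ 2 + n * (ρ ^ 2) ^ 3 := by
  have hρ0 : 0 ≤ ρ := by linarith
  have hρ1 : ρ ≤ 0.4083 := by nlinarith
  have ha2 : a ^ 2 ≤ ρ ^ 2 := by nlinarith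
  have hw : 4 * (a ^ 2 + a * ρ + ρ ^ 2) - 3 * ρ ^ 2 ≤ 9 * ρ ^ 2 := by nlinarith
  set s := ρ ^ 2 with hs
  have hs0 : 0 ≤ s := sq_nonneg ρ
  have hs2 : s ^ 2 ≤ s / 6 := by nlinarith
  have p1 : 0.0234 * 0.39 ≤ m₀ * m₁ := by nlinarith
  have p2 : 0.0234 * 1.866 ≤ m₀ * m₂ := by nlinarith
  have p3 : m₁ * n ≤ 0.417 * 0.22 := by nlinarith
  have p4 : m₀ * n ≤ 0.0249 * 0.22 := by nlinarith
  have p5 : m₂ * n ≤ 1.8886 * 0.22 := by nlinarith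
  have p4' : 0 ≤ m₀ * n := by positivity
  have q1 : m₁ * n * s ≤ 0.417 * 0.22 * s := mul_le_mul_of_nonneg_right p3 hs0
  have q2 : m₀ * a ^ 2 ≤ 0.0249 * s := mul_le_mul h0' ha2 (sq_nonneg a) (by norm_num)
  have q3 : m₂ * s ^ 2 ≤ 1.8886 * (s / 6) := mul_le_mul h2' hs2 (sq_nonneg s) (by norm_num)
  have q4 : m₂ * n * s ^ 2 ≤ 1.8886 * 0.22 * (s / 6) :=
    mul_le_mul p5 hs2 (sq_nonneg s) (by norm_num)
  have E : -0.0408 ≤ m₀ * m₂ - m₁ * n * s - 4 * m₀ * a ^ 2 - m₂ * s ^ 2 := by linarith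
  have r1 : (a + ρ) * -0.0408
      ≤ (a + ρ) * (m₀ * m₂ - m₁ * n * s - 4 * m₀ * a ^ 2 - m₂ * s ^ 2) :=
    mul_le_mul_of_nonneg_left E (by linarith)
  have r2 : (m₀ * n + m₁ * s) * (4 * (a ^ 2 + a * ρ + s) - 3 * s)
      ≤ (m₀ * n + m₁ * s) * (9 * s) :=
    mul_le_mul_of_nonneg_left hw (by positivity)
  have r3 : m₀ * n * (9 * s) ≤ 0.0249 * 0.22 * (9 * s) :=
    mul_le_mul_of_nonneg_right p4 (by positivity)
  have r4 : 0.39 * 0.366 * s ≤ m₁ * m₂ * s - m₁ * s * (9 * s) := by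
    have : 0.366 ≤ m₂ - 9 * s := by linarith
    have h3 : 0.39 * 0.366 ≤ m₁ * (m₂ - 9 * s) := mul_le_mul h1 this (by norm_num) (by linarith)
    nlinarith
  have r5 : 0 ≤ n * s ^ 3 := by positivity
  linarith

/-- For given `|v| = ρ` the majorant is largest when `v = ρ`. -/
lemma majorant_mono {x k q y a ρ : ℝ} (hx : 0.153 ≤ x) (hx' : x ≤ 0.1575) (hk : 0.0533 ≤ k)
    (hk' : k ≤ 0.055) (hq : 0 < q) (hy : 0 < y) (hqy : 0.016 ≤ q * y) (ha : -ρ ≤ a)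
    (ha' : a ≤ ρ) (hρ : (1 - k) * ρ ^ 2 ≤ x) :
    majorant x k q y a (ρ ^ 2) ≤ majorant x k q y ρ (ρ ^ 2) := by
  have hs : ρ ^ 2 ≤ 1 / 6 := by nlinarith [sq_nonneg ρ]
  have hN := slope_lower (m₀ := x ^ 2) (m₁ := 4 * x - 4 * k) (m₂ := 2 + 2 * x - 8 * k) (n := 4 * k)
    (a := a) (ρ := ρ) (by nlinarith) (by nlinarith) (by linarith) (by linarith) (by linarith)
    (by linarith) (by linarith) (by linarith) ha ha' hs
  set N := x ^ 2 * (4 * x - 4 * k) + (4 * x - 4 * k) * (2 + 2 * x - 8 * k) * ρ ^ 2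
      + 2 * (a + ρ) * (x ^ 2 * (2 + 2 * x - 8 * k) - (4 * x - 4 * k) * (4 * k) * ρ ^ 2
        - 4 * x ^ 2 * a ^ 2 - (2 + 2 * x - 8 * k) * (ρ ^ 2) ^ 2)
      - (x ^ 2 * (4 * k) + (4 * x - 4 * k) * ρ ^ 2) * (4 * (a ^ 2 + a * ρ + ρ ^ 2) - 3 * ρ ^ 2)
      - (2 + 2 * x - 8 * k) * (4 * k) * (ρ ^ 2) ^ 2 + (4 * k) * (ρ ^ 2) ^ 3 with hNdef
  have key : majorant x k q y ρ (ρ ^ 2) - majorant x k q y a (ρ ^ 2)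
      = (ρ - a) * ((N + 4 * (q * y)) / y + 4 * (k * (x - (1 - k) * ρ ^ 2) / q)) := by
    simp only [majorant, quarticNormSq, hNdef]
    field_simp
    ring
  have h1 : 0 ≤ (N + 4 * (q * y)) / y := div_nonneg (by linarith) hy.le
  have h2 : 0 ≤ 4 * (k * (x - (1 - k) * ρ ^ 2) / q) := by
    have : 0 ≤ x - (1 - k) * ρ ^ 2 := by linarith
    positivity
  have := mul_nonneg (sub_nonneg.mpr ha') (add_nonneg h1 h2)
  linarith

/-- Nonnegativity of the Bernstein basis polynomials of `[l, h]`. A polynomial with nonnegative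
Bernstein coefficients is nonnegative on `[l, h]`; `linarith` finds these coefficients. -/
lemma bernstein_term_nonneg {l h ρ : ℝ} (hl : l ≤ ρ) (hh : ρ ≤ h) (i j : ℕ) :
    0 ≤ (ρ - l) ^ i * (h - ρ) ^ j :=
  mul_nonneg (pow_nonneg (by linarith) i) (pow_nonneg (by linarith) j)

lemma majorant_real {x k q y ρ : ℝ} : majorant x k q y ρ (ρ ^ 2)
    = ((x ^ 2 + (4 * x - 4 * k) * ρ + (2 + 2 * x - 8 * k) * ρ ^ 2 - 4 * k * ρ ^ 3 - ρ ^ 4) ^ 2 / y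
      + y) / 2 + 2 * (1 + ρ) ^ 2 * (k * (x - (1 - k) * ρ ^ 2) / q + q) := by
  simp only [majorant, quarticNormSq]
  ring

lemma majorant_one_low {ρ : ℝ} (hl : 0 ≤ ρ) (hh : ρ ≤ (7 / 25)) :
    majorant (153 / 1000) (533 / 10000) (11 / 200) (13 / 40) ρ (ρ ^ 2) ≤ (199 / 200) * (1 - (153 / 1000)) ^ 2 := by
  rw [majorant_real]
  have B := bernstein_term_nonneg hl hh
  linarith [B 0 8, B 1 7, B 2 6, B 3 5, B 4 4, B 5 3, B 6 2, B 7 1, B 8 0]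

lemma majorant_one_high {ρ : ℝ} (hl : (7 / 25) ≤ ρ) (hh : ρ ≤ (4021 / 10000)) :
    majorant (153 / 1000) (533 / 10000) (11 / 200) (13 / 40) ρ (ρ ^ 2) ≤ (199 / 200) * (1 - (153 / 1000)) ^ 2 := by
  rw [majorant_real]
  have B := bernstein_term_nonneg hl hh
  linarith [B 0 8, B 1 7, B 2 6, B 3 5, B 4 4, B 5 3, B 6 2, B 7 1, B 8 0]

lemma majorant_two {ρ : ℝ} (hl : (87 / 250) ≤ ρ) (hh : ρ ≤ (4049 / 10000)) :
    majorant (31 / 200) (541 / 10000) (9 / 200) (3 / 8) ρ (ρ ^ 2) ≤ (249 / 250) * (1 - (31 / 200)) ^ 2 := by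
  rw [majorant_real]
  have B := bernstein_term_nonneg hl hh
  linarith [B 0 8, B 1 7, B 2 6, B 3 5, B 4 4, B 5 3, B 6 2, B 7 1, B 8 0]

lemma majorant_three {ρ : ℝ} (hl : (369 / 1000) ≤ ρ) (hh : ρ ≤ (4083 / 10000)) :
    majorant (63 / 400) (11 / 200) (1 / 25) (2 / 5) ρ (ρ ^ 2) ≤ (199 / 200) * (1 - (63 / 400)) ^ 2 := by
  rw [majorant_real]
  have B := bernstein_term_nonneg hl hh
  linarith [B 0 8, B 1 7, B 2 6, B 3 5, B 4 4, B 5 3, B 6 2, B 7 1, B 8 0]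

/-! ### The root transform of `f` and the maximum principle -/

/-- The second bound for the defect, from the square-root transform `ψ` of `f` itself:
`T = 2 z² ψ'' / ψ - (z f' / f - 1)² / 2`, where `|z² ψ''| ≤ δ₂` and `|ψ| ≥ 1 - |z| - δ₀`. The function `Φ` is
the extension of the defect across `0`, where `uDefect` has a junk value. -/
lemma root_data {f : ℂ → ℂ} (hf : InClassS f) {b : ℝ} (hb : b = ‖iteratedDeriv 2 f 0‖ / 2) :
    b ≤ 2 ∧ ∃ Φ : ℂ → ℂ, DifferentiableOn ℂ Φ (ball 0 1) ∧
      (∀ z ∈ ball (0 : ℂ) 1, z ≠ 0 → Φ z = uDefect f z) ∧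
      ∀ z ∈ ball (0 : ℂ) 1, z ≠ 0 → ‖z‖ ^ 2 < 1 / 2 → ∀ δ₀ δ₂ κ : ℝ, 0 ≤ δ₀ → 0 ≤ δ₂ →
        (1 - b ^ 2 / 4) * tailZero (‖z‖ ^ 2) ≤ δ₀ ^ 2 →
        (1 - b ^ 2 / 4) * tailTwo (‖z‖ ^ 2) ≤ δ₂ ^ 2 →
        0 < 1 - ‖z‖ - δ₀ → δ₂ ≤ κ * (1 - ‖z‖ - δ₀) →
        ‖uDefect f z‖ ≤ ‖z * deriv f z / f z - 1‖ ^ 2 / 2 + 2 * κ := by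
  obtain ⟨ψ, hψ, hψ0, hfψ, hc, hc2, hb0, hb2⟩ := sqrt_transform_bounds hf
  obtain ⟨id1, id2⟩ := sqrt_transform_identities hf.1 hψ hfψ
  have hψa : AnalyticOnNhd ℂ ψ (ball 0 1) := hψ.analyticOnNhd isOpen_ball
  have hbc : b = 2 * ‖deriv ψ 0‖ := by
    rw [hb, show iteratedDeriv 2 f 0 = deriv (deriv f) 0 by
      rw [iteratedDeriv_succ, iteratedDeriv_one], hc2, norm_mul]
    norm_num; ring
  have hν : 1 - b ^ 2 / 4 = 1 - ‖deriv ψ 0‖ ^ 2 := by rw [hbc]; ring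
  have hne : ∀ z ∈ ball (0 : ℂ) 1, ψ z ≠ 0 := by
    intro z hz h
    have := hfψ z hz
    rw [h] at this
    have hz0 : z = 0 := by simpa using this.symm
    rw [hz0, hψ0] at h
    exact one_ne_zero h
  have hform : ∀ z ∈ ball (0 : ℂ) 1, z ≠ 0 →
      z * deriv f z / f z = 1 - 2 * (z * deriv ψ z / ψ z) ∧
      uDefect f z = 2 * (z ^ 2 * deriv (deriv ψ) z / ψ z - (z * deriv ψ z / ψ z) ^ 2) := by
    intro z hz hz0
    have hp := hne z hz
    have hfz : f z = z / ψ z ^ 2 := by rw [eq_div_iff (pow_ne_zero 2 hp)]; exact hfψ z hz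
    have d1 : deriv f z = (1 - 2 * f z * ψ z * deriv ψ z) / ψ z ^ 2 := by
      rw [eq_div_iff (pow_ne_zero 2 hp)]; linear_combination id1 z hz
    have d2 : deriv (deriv f) z = -(4 * deriv f z * ψ z * deriv ψ z
        + 2 * f z * (deriv ψ z ^ 2 + ψ z * deriv (deriv ψ) z)) / ψ z ^ 2 := by
      rw [eq_div_iff (pow_ne_zero 2 hp)]; linear_combination id2 z hz
    constructor
    · rw [d1, hfz]; field_simp
    · rw [uDefect, d2, d1, hfz]; field_simp; ring
  refine ⟨by rw [hbc]; linarith, fun z => 2 * (z ^ 2 * deriv (deriv ψ) z / ψ z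
    - (z * deriv ψ z / ψ z) ^ 2), ?_, fun z hz hz0 => (hform z hz hz0).2.symm, ?_⟩
  · intro z hz
    have hp := hne z hz
    have a1 := (hψa z hz).differentiableAt
    have a2 := (hψa z hz).deriv.differentiableAt
    have a3 := (hψa z hz).deriv.deriv.differentiableAt
    apply DifferentiableAt.differentiableWithinAt
    fun_prop (disch := exact hp)
  · intro z hz hz0 hz2 δ₀ δ₂ κ hδ₀ hδ₂ h0 h2 hpos hκ
    obtain ⟨hG, hT⟩ := hform z hz hz0
    have e0 : ‖ψ z - 1 - deriv ψ 0 * z‖ ≤ δ₀ := by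
      refine le_of_sq_le_sq ((hb0 z hz).trans ?_) hδ₀
      rw [← hν]; exact h0
    have e2 : ‖z ^ 2 * deriv (deriv ψ) z‖ ≤ δ₂ := by
      refine le_of_sq_le_sq ((hb2 z hz hz2).trans ?_) hδ₂
      rw [← hν]; exact h2
    have e1 : 1 - ‖z‖ - δ₀ ≤ ‖ψ z‖ := by
      have t1 : ‖(1 : ℂ)‖ ≤ ‖ψ z‖ + ‖ψ z - 1 - deriv ψ 0 * z‖ + ‖deriv ψ 0 * z‖ := by
        calc ‖(1 : ℂ)‖ = ‖ψ z - (ψ z - 1 - deriv ψ 0 * z) - deriv ψ 0 * z‖ := by congr 1; ring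
          _ ≤ _ := (norm_sub_le _ _).trans (by gcongr; exact norm_sub_le _ _)
      rw [norm_one, norm_mul] at t1
      nlinarith [mul_le_mul_of_nonneg_right hc (norm_nonneg z)]
    have hκ0 : 0 ≤ κ := by
      by_contra! h
      nlinarith
    have e3 : ‖z ^ 2 * deriv (deriv ψ) z / ψ z‖ ≤ κ := by
      rw [norm_div, div_le_iff₀ (by linarith)]
      exact e2.trans (hκ.trans (mul_le_mul_of_nonneg_left e1 hκ0))
    have e4 : ‖z * deriv f z / f z - 1‖ = 2 * ‖z * deriv ψ z / ψ z‖ := by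
      rw [hG, show 1 - 2 * (z * deriv ψ z / ψ z) - 1 = -(2 * (z * deriv ψ z / ψ z)) by ring,
        norm_neg, norm_mul]
      norm_num
    rw [hT, e4, norm_mul]
    have e5 := norm_sub_le (z ^ 2 * deriv (deriv ψ) z / ψ z) ((z * deriv ψ z / ψ z) ^ 2)
    rw [norm_pow] at e5
    norm_num
    norm_num at e5 e3
    linarith

lemma le_of_circle {Φ : ℂ → ℂ} (hΦ : DifferentiableOn ℂ Φ (ball 0 1)) {R θ : ℝ} (hR0 : 0 < R)
    (hR1 : R < 1) (h : ∀ z : ℂ, ‖z‖ = R → ‖Φ z‖ ≤ θ) {z : ℂ} (hz : ‖z‖ ≤ R) : ‖Φ z‖ ≤ θ := by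
  refine Complex.norm_le_of_forall_mem_frontier_norm_le (U := ball (0 : ℂ) R) isBounded_ball
    ?_ ?_ ?_
  · refine (hΦ.mono ?_).diffContOnCl_ball (U := closedBall 0 R) subset_rfl
    exact closedBall_subset_ball hR1
  · intro w hw
    rw [frontier_ball _ hR0.ne'] at hw
    exact h w (by simpa using hw)
  · rw [closure_ball _ hR0.ne']; simpa using hz

/-- Combination of the two bounds: `hA` is the majorant estimate for `|v| ≥ l`, and `hB` is the estimate
used for `|v| < l`, where `(1 - x) (z f' / f - 1) = 2 v + v² + x`. -/
lemma circle_bound {f : ℂ → ℂ} (hf : InClassS f) {z : ℂ} (hz : z ∈ ball (0 : ℂ) 1) (hz0 : z ≠ 0)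
    {x k q y l θ : ℝ} (hxz : x = ‖z‖ ^ 2) (hx : 0.153 ≤ x) (hx' : x ≤ 0.1575) (hk : 0.0533 ≤ k)
    (hk' : k ≤ 0.055) (hq : 0 < q) (hy : 0 < y) (hqy : 0.016 ≤ q * y)
    (ht : tailZero x * (1 - k) ≤ k * x)
    (hA : ∀ ρ, 0 ≤ ρ → l ≤ ρ → (1 - k) * ρ ^ 2 ≤ x →
      majorant x k q y ρ (ρ ^ 2) ≤ θ * (1 - x) ^ 2)
    (hB : (1 - x) * ‖z * deriv f z / f z - 1‖ ≤ 2 * l + l ^ 2 + x → ‖uDefect f z‖ ≤ θ) :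
    ‖uDefect f z‖ ≤ θ := by
  obtain ⟨u, τ, hp, hT, hτ, hu⟩ := koebe_data hf hz hz0 hxz
  obtain ⟨h1, h2⟩ := majorant_bound (q := q) (y := y) (by linarith) (by linarith) (by linarith)
    hq hy ht hT hτ hu
  rcases le_or_gt l ‖τ - u‖ with hl | hl
  · have h3 := abs_le.mp (Complex.abs_re_le_norm (τ - u))
    have h4 := majorant_mono hx hx' hk hk' hq hy hqy h3.1 h3.2 h1
    have h5 := hA _ (norm_nonneg _) hl h1
    have h6 : 0 < (1 - x) ^ 2 := by nlinarith
    refine le_of_mul_le_mul_left ?_ h6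
    linarith
  · apply hB
    have e : ((1 - x : ℝ) : ℂ) * (z * deriv f z / f z - 1)
        = 2 * (τ - u) + (τ - u) ^ 2 + (x : ℂ) := by
      push_cast
      linear_combination -hp
    have e2 : (1 - x) * ‖z * deriv f z / f z - 1‖ = ‖2 * (τ - u) + (τ - u) ^ 2 + (x : ℂ)‖ := by
      rw [← e, norm_mul, Complex.norm_real, Real.norm_eq_abs, abs_of_nonneg (by linarith)]
    rw [e2]
    have e3 : ‖2 * (τ - u) + (τ - u) ^ 2 + (x : ℂ)‖ ≤ 2 * ‖τ - u‖ + ‖τ - u‖ ^ 2 + x := by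
      refine (norm_add₃_le).trans (le_of_eq ?_)
      rw [norm_mul, norm_pow, Complex.norm_real, Real.norm_eq_abs, abs_of_nonneg (by linarith)]
      norm_num
    nlinarith [norm_nonneg (τ - u)]

/-! ### Three circles -/

/-- The choice `l = -1` makes the alternative `|v| < l` vacuous. -/
lemma circle_one {f : ℂ → ℂ} (hf : InClassS f) {z : ℂ} (hz : z ∈ ball (0 : ℂ) 1) (hz0 : z ≠ 0)
    (hxz : ‖z‖ ^ 2 = 153 / 1000) : ‖uDefect f z‖ ≤ 199 / 200 := by
  refine circle_bound hf hz hz0 (x := 153 / 1000) (k := 533 / 10000) (q := 11 / 200)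
    (y := 13 / 40) (l := -1) hxz.symm (by norm_num) (by norm_num) (by norm_num) (by norm_num)
    (by norm_num) (by norm_num) (by norm_num) (by norm_num [tailZero]) ?_ ?_
  · intro ρ hρ0 _ hρ
    have : ρ ≤ 4021 / 10000 := by
      refine le_of_sq_le_sq ?_ (by norm_num)
      linarith
    rcases le_total ρ (7 / 25) with h | h
    · exact majorant_one_low hρ0 h
    · exact majorant_one_high h this
  · intro h
    have := norm_nonneg (z * deriv f z / f z - 1)
    exact absurd h (by push Not; linarith)

lemma circle_two {f : ℂ → ℂ} (hf : InClassS f) {b : ℝ} (hb : b = ‖iteratedDeriv 2 f 0‖ / 2)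
    (hb2 : 1 - b ^ 2 / 4 ≤ 0.12215) {z : ℂ} (hz : z ∈ ball (0 : ℂ) 1) (hz0 : z ≠ 0)
    (hxz : ‖z‖ ^ 2 = 155 / 1000) : ‖uDefect f z‖ ≤ 9995 / 10000 := by
  refine circle_bound hf hz hz0 (x := 155 / 1000) (k := 541 / 10000) (q := 45 / 1000)
    (y := 375 / 1000) (l := 348 / 1000) hxz.symm (by norm_num) (by norm_num) (by norm_num)
    (by norm_num) (by norm_num) (by norm_num) (by norm_num) (by norm_num [tailZero]) ?_ ?_
  · intro ρ hρ0 hl hρ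
    have : ρ ≤ 4049 / 10000 := by
      refine le_of_sq_le_sq ?_ (by norm_num)
      linarith
    have h := majorant_two (ρ := ρ) (by linarith) this
    norm_num at h ⊢
    linarith
  · intro h
    obtain ⟨-, Φ, -, -, hΦ⟩ := root_data hf hb
    have hR : ‖z‖ ≤ 0.39371 := le_of_sq_le_sq (by rw [hxz]; norm_num) (by norm_num)
    have t0 : tailZero (155 / 1000) ≤ 0.00886 := by norm_num [tailZero]
    have t0' : 0 ≤ tailZero (155 / 1000) := by norm_num [tailZero]
    have t2 : tailTwo (155 / 1000) ≤ 0.0765 := by norm_num [tailTwo]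
    have t2' : 0 ≤ tailTwo (155 / 1000) := by norm_num [tailTwo]
    have := hΦ z hz hz0 (by rw [hxz]; norm_num) 0.0329 0.0967 0.1687 (by norm_num) (by norm_num)
      (by rw [hxz]; nlinarith) (by rw [hxz]; nlinarith) (by linarith) (by linarith)
    have e : ‖z * deriv f z / f z - 1‖ ≤ 1.15043 := by linarith
    nlinarith [norm_nonneg (z * deriv f z / f z - 1)]

lemma circle_three {f : ℂ → ℂ} (hf : InClassS f) {b : ℝ} (hb : b = ‖iteratedDeriv 2 f 0‖ / 2)
    (hb2 : 1 - b ^ 2 / 4 ≤ 0.06385) {z : ℂ} (hz : z ∈ ball (0 : ℂ) 1) (hz0 : z ≠ 0)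
    (hxz : ‖z‖ ^ 2 = 1575 / 10000) : ‖uDefect f z‖ ≤ 9995 / 10000 := by
  refine circle_bound hf hz hz0 (x := 1575 / 10000) (k := 55 / 1000) (q := 4 / 100)
    (y := 4 / 10) (l := 369 / 1000) hxz.symm (by norm_num) (by norm_num) (by norm_num)
    (by norm_num) (by norm_num) (by norm_num) (by norm_num) (by norm_num [tailZero]) ?_ ?_
  · intro ρ hρ0 hl hρ
    have : ρ ≤ 4083 / 10000 := by
      refine le_of_sq_le_sq ?_ (by norm_num)
      linarith
    have h := majorant_three (ρ := ρ) (by linarith) this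
    norm_num at h ⊢
    linarith
  · intro h
    obtain ⟨-, Φ, -, -, hΦ⟩ := root_data hf hb
    have hR : ‖z‖ ≤ 0.39687 := le_of_sq_le_sq (by rw [hxz]; norm_num) (by norm_num)
    have t0 : tailZero (1575 / 10000) ≤ 0.00917 := by norm_num [tailZero]
    have t0' : 0 ≤ tailZero (1575 / 10000) := by norm_num [tailZero]
    have t2 : tailTwo (1575 / 10000) ≤ 0.0802 := by norm_num [tailTwo]
    have t2' : 0 ≤ tailTwo (1575 / 10000) := by norm_num [tailTwo]
    have := hΦ z hz hz0 (by rw [hxz]; norm_num) 0.0243 0.0716 0.124 (by norm_num) (by norm_num)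
      (by rw [hxz]; nlinarith) (by rw [hxz]; nlinarith) (by linarith) (by linarith)
    have e : ‖z * deriv f z / f z - 1‖ ≤ 1.22454 := by linarith
    nlinarith [norm_nonneg (z * deriv f z / f z - 1)]

lemma four_B_lower {B : ℝ} (hB : B = ((2 * Real.pi / Real.sqrt 3)
    * (Real.cosh (2 * Real.pi / Real.sqrt 3) / Real.sinh (2 * Real.pi / Real.sqrt 3)) - 1)
      / (8 / 3)) : 3.9413 ≤ 4 * B := by
  have h3 : Real.sqrt 3 ≤ 1.73206 := Real.sqrt_le_iff.mpr (by norm_num)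
  have h30 : 0 < Real.sqrt 3 := by positivity
  set w := 2 * Real.pi / Real.sqrt 3 with hw
  have hw1 : 3.62754 ≤ w := by
    rw [hw, le_div_iff₀ h30]
    nlinarith [Real.pi_gt_d6]
  have hs : 0 < Real.sinh w := Real.sinh_pos_iff.mpr (by linarith)
  have hc : 1 ≤ Real.cosh w / Real.sinh w := by
    rw [one_le_div hs]
    exact (Real.sinh_lt_cosh w).le
  rw [hB]
  nlinarith

/-- If `D p(y) ≤ (3 / 4) (1 - y)⁵` with `p` increasing, then `D ≤ C` follows from the reverse inequality for
`C` at a smaller point `X`. -/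
lemma factor_le_of_cond {y D X C : ℝ} (hX : 0 < X) (hXy : X ≤ y) (hy : y < 1) (hC : 0 ≤ C)
    (hD : D * (y ^ 2 * (y ^ 3 + 2 * y ^ 2 + 11 * y + 4)) ≤ 3 / 4 * (1 - y) ^ 5)
    (hXC : 3 / 4 * (1 - X) ^ 5 ≤ C * (X ^ 2 * (X ^ 3 + 2 * X ^ 2 + 11 * X + 4))) : D ≤ C := by
  have h1 : (1 - y) ^ 5 ≤ (1 - X) ^ 5 := by gcongr
  have h2 : X ^ 2 * (X ^ 3 + 2 * X ^ 2 + 11 * X + 4)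
      ≤ y ^ 2 * (y ^ 3 + 2 * y ^ 2 + 11 * y + 4) := by gcongr
  have h3 : 0 < y ^ 2 * (y ^ 3 + 2 * y ^ 2 + 11 * y + 4) := by
    have : 0 < y := by linarith
    positivity
  refine le_of_mul_le_mul_right ?_ h3
  nlinarith

theorem Pf_in_U_on_disk
    (f : ℂ → ℂ) (hf : InClassS f) (b : ℝ) (hb : b = ‖iteratedDeriv 2 f 0‖ / 2)
    (B : ℝ)
    (hB : B = ((2 * Real.pi / Real.sqrt 3) * (Real.cosh (2 * Real.pi / Real.sqrt 3) / Real.sinh (2 * Real.pi / Real.sqrt 3)) - 1) / (8 / 3))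
    (r : ℝ) (hr0 : 0 < r) (hr1 : r < 1)
    (hcond : (4 * B - 3 * b ^ 2 / 7) * (r ^ 4 * (r ^ 6 + 2 * r ^ 4 + 11 * r ^ 2 + 4))
        ≤ (3 / 4) * (1 - r ^ 2) ^ 5) :
    ∀ z : ℂ, 0 < ‖z‖ → ‖z‖ < r →
      ‖deriv (fun w => f w / deriv f w) z * (z / (f z / deriv f z)) ^ 2 - 1‖ < 1 := by
  intro z hz0 hzr
  obtain ⟨hb2, Φ, hΦ, hΦf, -⟩ := root_data hf hb
  have hb0 : 0 ≤ b := by rw [hb]; positivity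
  have hBl := four_B_lower hB
  have hz1 : z ∈ ball (0 : ℂ) 1 := mem_ball_zero_iff.mpr (hzr.trans hr1)
  have hzne : z ≠ 0 := norm_pos_iff.mp hz0
  rw [uDefect_eq hf hz1 hzne, ← hΦf z hz1 hzne]
  have reduce : ∀ X θ : ℝ, 0 < X → X < 1 → θ < 1 → r ^ 2 ≤ X →
      (∀ w ∈ ball (0 : ℂ) 1, w ≠ 0 → ‖w‖ ^ 2 = X → ‖uDefect f w‖ ≤ θ) → ‖Φ z‖ < 1 := by
    intro X θ hX0 hX1 hθ hrX h
    have hR0 : 0 < √X := Real.sqrt_pos.mpr hX0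
    have hR1 : √X < 1 := by rw [Real.sqrt_lt' one_pos]; linarith
    refine lt_of_le_of_lt (le_of_circle hΦ hR0 hR1 (θ := θ) (fun w hw => ?_) ?_) hθ
    · have hw1 : w ∈ ball (0 : ℂ) 1 := by rw [mem_ball_zero_iff, hw]; exact hR1
      have hw0 : w ≠ 0 := by rw [← norm_pos_iff, hw]; exact hR0
      rw [hΦf w hw1 hw0]
      exact h w hw1 hw0 (by rw [hw, Real.sq_sqrt hX0.le])
    · exact hzr.le.trans (Real.le_sqrt_of_sq_le hrX)
  have hr2 : r ^ 2 < 1 := by nlinarith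
  have hD : (4 * B - 3 * b ^ 2 / 7)
      * ((r ^ 2) ^ 2 * ((r ^ 2) ^ 3 + 2 * (r ^ 2) ^ 2 + 11 * r ^ 2 + 4))
      ≤ 3 / 4 * (1 - r ^ 2) ^ 5 := by
    refine le_trans (le_of_eq ?_) hcond
    ring
  rcases le_or_gt (r ^ 2) (153 / 1000) with h1 | h1
  · exact reduce (153 / 1000) (199 / 200) (by norm_num) (by norm_num) (by norm_num) h1
      fun w hw hw0 hwx => circle_one hf hw hw0 hwx
  rcases le_or_gt (r ^ 2) (155 / 1000) with h2 | h2
  · have := factor_le_of_cond (C := 2.4364) (by norm_num) h1.le hr2 (by norm_num) hD (by norm_num)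
    exact reduce (155 / 1000) (9995 / 10000) (by norm_num) (by norm_num) (by norm_num) h2
      fun w hw hw0 hwx => circle_two hf hb (by linarith) hw hw0 hwx
  have hD2 := factor_le_of_cond (C := 2.3364) (by norm_num) h2.le hr2 (by norm_num) hD (by norm_num)
  rcases le_or_gt (r ^ 2) (1575 / 10000) with h3 | h3
  · exact reduce (1575 / 10000) (9995 / 10000) (by norm_num) (by norm_num) (by norm_num) h3
      fun w hw hw0 hwx => circle_three hf hb (by linarith) hw hw0 hwx
  · have := factor_le_of_cond (C := 2.2181) (by norm_num) h3.le hr2 (by norm_num) hD (by norm_num)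
    nlinarith
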